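/- arXiv:1507.02176 — 2 statements merged into one kernel-verified Lean document; each statement's English description precedes it below -/
import Mathlib

section
/- Under assumptions (H1)–(H5), the weak semilimits of the value functions do not depend on the fast variable for positive times: for every x0 ∈ ℝ^N, every y0, z0 ∈ ℝ^M and every t0 > 0 one has (liminf_# V^ε)(x0,y0,t0) = (liminf_# V^ε)(x0,z0,t0) and (limsup^# V^ε)(x0,y0,t0) = (limsup^# V^ε)(x0,z0,t0). -/
open Set MeasureTheory Metric Filter
open scoped RealInnerProductSpace Topology

noncomputable section

/-- `ℝ^n` with the Euclidean structure. -/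
abbrev Euc (n : ℕ) : Type := EuclideanSpace ℝ (Fin n)

/-- A control: a measurable map with values in the control set `A`. -/
def IsControl {k : ℕ} (A : Set (Euc k)) (α : ℝ → Euc k) : Prop :=
  Measurable α ∧ ∀ t, α t ∈ A

/-- `(ξ, η)` is a trajectory of the controlled dynamics `(CD_ε)` for the control `α`:
this is the integral form, equivalent to `(ξ, η)` being locally absolutely continuous
with `ξ' = ε f(ξ, η, α)` and `η' = g(ξ, η, α)` a.e. on `[0, ∞)`. -/
def IsTrajectory {N M k : ℕ}
    (f : Euc N → Euc M → Euc k → Euc N) (g : Euc N → Euc M → Euc k → Euc M)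
    (ε : ℝ) (α : ℝ → Euc k) (ξ : ℝ → Euc N) (η : ℝ → Euc M) : Prop :=
  (∀ t, 0 ≤ t → IntervalIntegrable (fun s => f (ξ s) (η s) (α s)) volume 0 t) ∧
  (∀ t, 0 ≤ t → IntervalIntegrable (fun s => g (ξ s) (η s) (α s)) volume 0 t) ∧
  (∀ t, 0 ≤ t → ξ t = ξ 0 + ε • ∫ s in (0:ℝ)..t, f (ξ s) (η s) (α s)) ∧
  (∀ t, 0 ≤ t → η t = η 0 + ∫ s in (0:ℝ)..t, g (ξ s) (η s) (α s))

/-- The value function `V^ε(x, y, t)` of the singularly perturbed optimal control problem. -/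
def valueFun {N M k : ℕ} (A : Set (Euc k))
    (f : Euc N → Euc M → Euc k → Euc N) (g : Euc N → Euc M → Euc k → Euc M)
    (ℓ : Euc N → Euc M → Euc k → ℝ) (u0 : Euc N → Euc M → ℝ)
    (ε : ℝ) (x : Euc N) (y : Euc M) (t : ℝ) : ℝ :=
  sInf { v : ℝ | ∃ (α : ℝ → Euc k) (ξ : ℝ → Euc N) (η : ℝ → Euc M),
    IsControl A α ∧ IsTrajectory f g ε α ξ η ∧ ξ 0 = x ∧ η 0 = y ∧
    IntervalIntegrable (fun s => ℓ (ξ s) (η s) (α s)) volume 0 (t / ε) ∧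
    v = ε * (∫ s in (0:ℝ)..(t / ε), ℓ (ξ s) (η s) (α s)) + u0 (ξ (t / ε)) (η (t / ε)) }

/-- The Hamiltonian `H(x,y,p,q) = max_{a ∈ A} { -p·f(x,y,a) - q·g(x,y,a) - ℓ(x,y,a) }`. -/
def Ham {N M k : ℕ} (A : Set (Euc k))
    (f : Euc N → Euc M → Euc k → Euc N) (g : Euc N → Euc M → Euc k → Euc M)
    (ℓ : Euc N → Euc M → Euc k → ℝ)
    (x : Euc N) (y : Euc M) (p : Euc N) (q : Euc M) : ℝ :=
  sSup ((fun a => -⟪p, f x y a⟫ - ⟪q, g x y a⟫ - ℓ x y a) '' A)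

/-- Viscosity subsolution of the stationary equation `G(y, Du) = b` on `Ω`. -/
def IsVSubOn {m : ℕ} (G : Euc m → Euc m → ℝ) (b : ℝ) (Ω : Set (Euc m)) (u : Euc m → ℝ) : Prop :=
  UpperSemicontinuousOn u Ω ∧
  ∀ ψ : Euc m → ℝ, ContDiff ℝ 1 ψ → ∀ y ∈ Ω,
    IsLocalMaxOn (fun z => u z - ψ z) Ω y → G y (gradient ψ y) ≤ b

/-- Viscosity supersolution of the stationary equation `G(y, Du) = b` on `Ω`. -/
def IsVSupOn {m : ℕ} (G : Euc m → Euc m → ℝ) (b : ℝ) (Ω : Set (Euc m)) (u : Euc m → ℝ) : Prop :=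
  LowerSemicontinuousOn u Ω ∧
  ∀ ψ : Euc m → ℝ, ContDiff ℝ 1 ψ → ∀ y ∈ Ω,
    IsLocalMinOn (fun z => u z - ψ z) Ω y → b ≤ G y (gradient ψ y)

/-- The set of levels `b` for which `F(y, Du) = b` has a viscosity subsolution on `ℝ^m`. -/
def subsolLevels {m : ℕ} (F : Euc m → Euc m → ℝ) : Set ℝ :=
  { b : ℝ | ∃ u : Euc m → ℝ, IsVSubOn F b univ u }

/-- The critical value of a Hamiltonian `F` on `ℝ^m`. -/
def critVal {m : ℕ} (F : Euc m → Euc m → ℝ) : ℝ :=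
  sInf (subsolLevels F)

/-- The effective Hamiltonian `H̄(x, p)`. -/
def effH {N M k : ℕ} (A : Set (Euc k))
    (f : Euc N → Euc M → Euc k → Euc N) (g : Euc N → Euc M → Euc k → Euc M)
    (ℓ : Euc N → Euc M → Euc k → ℝ) (x : Euc N) (p : Euc N) : ℝ :=
  critVal (fun (y q : Euc M) => Ham A f g ℓ x y p q)

/-- The frozen Hamiltonian `H₀(y, q) = H(x₀, y, p₀, q)` of the cell problem. -/
def cellH {N M k : ℕ} (A : Set (Euc k))
    (f : Euc N → Euc M → Euc k → Euc N) (g : Euc N → Euc M → Euc k → Euc M)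
    (ℓ : Euc N → Euc M → Euc k → ℝ) (x0 p0 : Euc N) : Euc M → Euc M → ℝ :=
  fun y q => Ham A f g ℓ x0 y p0 q

/-- Viscosity subsolution of `u_t + G(x, D_x u) = 0` on `Ω ⊆ ℝ^n × ℝ`. -/
def IsParabSubOn {n : ℕ} (G : Euc n → Euc n → ℝ) (Ω : Set (Euc n × ℝ)) (u : Euc n × ℝ → ℝ) : Prop :=
  UpperSemicontinuousOn u Ω ∧
  ∀ ψ : Euc n × ℝ → ℝ, ContDiff ℝ 1 ψ → ∀ z ∈ Ω,
    IsLocalMaxOn (fun w => u w - ψ w) Ω z →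
    deriv (fun s => ψ (z.1, s)) z.2 + G z.1 (gradient (fun x => ψ (x, z.2)) z.1) ≤ 0

/-- Viscosity supersolution of `u_t + G(x, D_x u) = 0` on `Ω ⊆ ℝ^n × ℝ`. -/
def IsParabSupOn {n : ℕ} (G : Euc n → Euc n → ℝ) (Ω : Set (Euc n × ℝ)) (u : Euc n × ℝ → ℝ) : Prop :=
  LowerSemicontinuousOn u Ω ∧
  ∀ ψ : Euc n × ℝ → ℝ, ContDiff ℝ 1 ψ → ∀ z ∈ Ω,
    IsLocalMinOn (fun w => u w - ψ w) Ω z →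
    0 ≤ deriv (fun s => ψ (z.1, s)) z.2 + G z.1 (gradient (fun x => ψ (x, z.2)) z.1)

/-- Viscosity subsolution of `u_t + H(x, y, D_x u, D_y u / ε) = 0` on `Ω ⊆ (ℝ^N × ℝ^M) × ℝ`. -/
def IsHJSubOn {N M : ℕ} (Hm : Euc N → Euc M → Euc N → Euc M → ℝ) (ε : ℝ)
    (Ω : Set ((Euc N × Euc M) × ℝ)) (u : (Euc N × Euc M) × ℝ → ℝ) : Prop :=
  UpperSemicontinuousOn u Ω ∧
  ∀ ψ : (Euc N × Euc M) × ℝ → ℝ, ContDiff ℝ 1 ψ → ∀ z ∈ Ω,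
    IsLocalMaxOn (fun w => u w - ψ w) Ω z →
    deriv (fun s => ψ (z.1, s)) z.2 +
      Hm z.1.1 z.1.2 (gradient (fun x => ψ ((x, z.1.2), z.2)) z.1.1)
        (ε⁻¹ • gradient (fun y => ψ ((z.1.1, y), z.2)) z.1.2) ≤ 0

/-- Viscosity supersolution of `u_t + H(x, y, D_x u, D_y u / ε) = 0` on `Ω`. -/
def IsHJSupOn {N M : ℕ} (Hm : Euc N → Euc M → Euc N → Euc M → ℝ) (ε : ℝ)
    (Ω : Set ((Euc N × Euc M) × ℝ)) (u : (Euc N × Euc M) × ℝ → ℝ) : Prop :=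
  LowerSemicontinuousOn u Ω ∧
  ∀ ψ : (Euc N × Euc M) × ℝ → ℝ, ContDiff ℝ 1 ψ → ∀ z ∈ Ω,
    IsLocalMinOn (fun w => u w - ψ w) Ω z →
    0 ≤ deriv (fun s => ψ (z.1, s)) z.2 +
      Hm z.1.1 z.1.2 (gradient (fun x => ψ ((x, z.1.2), z.2)) z.1.1)
        (ε⁻¹ • gradient (fun y => ψ ((z.1.1, y), z.2)) z.1.2)

/-- The upper weak semilimit `(limsup^# V^ε)(z)`. -/
def upperLim {Z : Type*} [TopologicalSpace Z] (V : ℝ → Z → ℝ) (z : Z) : ℝ :=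
  sSup { l : ℝ | ∃ (e : ℕ → ℝ) (w : ℕ → Z), (∀ n, 0 < e n) ∧
    Tendsto e atTop (𝓝 0) ∧ Tendsto w atTop (𝓝 z) ∧
    l = Filter.limsup (fun n => V (e n) (w n)) atTop }

/-- The lower weak semilimit `(liminf_# V^ε)(z)`. -/
def lowerLim {Z : Type*} [TopologicalSpace Z] (V : ℝ → Z → ℝ) (z : Z) : ℝ :=
  sInf { l : ℝ | ∃ (e : ℕ → ℝ) (w : ℕ → Z), (∀ n, 0 < e n) ∧
    Tendsto e atTop (𝓝 0) ∧ Tendsto w atTop (𝓝 z) ∧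
    l = Filter.liminf (fun n => V (e n) (w n)) atTop }

/-- The lower semicontinuous envelope `φ_#`. -/
def lscEnvelope {X : Type*} [TopologicalSpace X] (φ : X → ℝ) (x : X) : ℝ :=
  Filter.liminf φ (𝓝 x)

/-- Local equiboundedness of the family of value functions. -/
def LocEquibounded {N M : ℕ} (V : ℝ → Euc N → Euc M → ℝ → ℝ) : Prop :=
  ∀ C : Set (Euc N × Euc M × ℝ), Bornology.IsBounded C →
    ∃ Mb : ℝ, ∀ ε : ℝ, 0 < ε → ∀ z ∈ C, 0 ≤ z.2.2 → |V ε z.1 z.2.1 z.2.2| ≤ Mb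

/-- The sublevel set `Z_b(y)` of a Hamiltonian. -/
def sublevel {m : ℕ} (G : Euc m → Euc m → ℝ) (b : ℝ) (y : Euc m) : Set (Euc m) :=
  { q | G y q ≤ b }

/-- The support function `σ_b(y, v)` of the sublevel `Z_b(y)`. -/
def suppFn {m : ℕ} (G : Euc m → Euc m → ℝ) (b : ℝ) (y v : Euc m) : ℝ :=
  sSup ((fun q => ⟪q, v⟫) '' sublevel G b y)

/-- The intrinsic length of a curve (Lipschitz curves are differentiable a.e.). -/
def intrinsicLen {m : ℕ} (G : Euc m → Euc m → ℝ) (b : ℝ) (ξ : ℝ → Euc m) : ℝ :=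
  ∫ s in (0:ℝ)..1, suppFn G b (ξ s) (deriv ξ s)

/-- Admissible (Lipschitz) curves on `[0,1]` joining `y₁` to `y₂`. -/
def IsAdmCurve {m : ℕ} (ξ : ℝ → Euc m) (y₁ y₂ : Euc m) : Prop :=
  (∃ Kl : NNReal, LipschitzWith Kl ξ) ∧ ξ 0 = y₁ ∧ ξ 1 = y₂

/-- The intrinsic distance `S_b(y₁, y₂)`. -/
def intrinsicDist {m : ℕ} (G : Euc m → Euc m → ℝ) (b : ℝ) (y₁ y₂ : Euc m) : ℝ :=
  sInf { L : ℝ | ∃ ξ : ℝ → Euc m, IsAdmCurve ξ y₁ y₂ ∧ L = intrinsicLen G b ξ }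

/-- The weighted intrinsic length associated with a weight `h`. -/
def wIntrinsicLen {m : ℕ} (G : Euc m → Euc m → ℝ) (b : ℝ) (h : Euc m → ℝ) (ξ : ℝ → Euc m) : ℝ :=
  ∫ s in (0:ℝ)..1, h (ξ s) * suppFn G b (ξ s) (deriv ξ s)

/-- The weighted intrinsic distance `S_b^h(y₁, y₂)`. -/
def wIntrinsicDist {m : ℕ} (G : Euc m → Euc m → ℝ) (b : ℝ) (h : Euc m → ℝ) (y₁ y₂ : Euc m) : ℝ :=
  sInf { L : ℝ | ∃ ξ : ℝ → Euc m, IsAdmCurve ξ y₁ y₂ ∧ L = wIntrinsicLen G b h ξ }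

/-- The intrinsic critical distance `S(y₁, y₂)` of the cell problem at `(x₀, p₀)`. -/
def cellS {N M k : ℕ} (A : Set (Euc k))
    (f : Euc N → Euc M → Euc k → Euc N) (g : Euc N → Euc M → Euc k → Euc M)
    (ℓ : Euc N → Euc M → Euc k → ℝ) (x0 p0 : Euc N) (y₁ y₂ : Euc M) : ℝ :=
  intrinsicDist (cellH A f g ℓ x0 p0) (effH A f g ℓ x0 p0) y₁ y₂

/-- The Aubry set of `G` at the level `c`: points near which no global viscosity
subsolution of `G(y, Du) = c` is strict. -/
def AubrySet {m : ℕ} (G : Euc m → Euc m → ℝ) (c : ℝ) : Set (Euc m) :=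
  { y₀ | ¬ ∃ (u : Euc m → ℝ) (δ : ℝ) (U : Set (Euc m)),
      IsVSubOn G c univ u ∧ 0 < δ ∧ IsOpen U ∧ y₀ ∈ U ∧ IsVSubOn G (c - δ) U u }

end

/-!
By duality, (H3) says that locally uniformly some control pushes the fast variable with positive
speed in any prescribed direction, and on a compact set finitely many controls suffice for this.
Sampling the greedy feedback, which pushes towards the target, at small time steps therefore makes
the fast variable track any sufficiently slow curve, uniformly for small `ε`. Tracking a constant
keeps trajectories in a compact set, which gives local bounds on `V^ε`. Tracking the segment from
`y₀` to `z₀` takes a fast time `T` independent of `ε`, hence costs `O(ε)` while moving the slow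
variable and the time by `O(ε)`; by dynamic programming, `V^ε` near `(x₀, y₀, t₀)` is at most `V^ε`
near `(x₀, z₀, t₀)` up to `O(ε)`. Doing this from an arbitrary initial point near `(x₀, y₀)`
compares the upper semilimits. For the lower ones the terminal point near `(x₀, z₀)` is prescribed
instead, and the steering is done for the time-reversed system `(-εf, -g)`, which satisfies the
same assumptions.
-/

open scoped NNReal

noncomputable section

section Concatenation

variable {X : Type*} {T t : ℝ} {u v : ℝ → X}

/-- The function that follows `u` before the time `T` and `v`, with its clock started at `T`,
from then on. -/
def concatAt (T : ℝ) (u v : ℝ → X) (t : ℝ) : X :=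
  if t < T then u t else v (t - T)

lemma concatAt_of_lt (h : t < T) : concatAt T u v t = u t := if_pos h

lemma concatAt_add (h : 0 ≤ t) : concatAt T u v (T + t) = v t := by
  simp only [concatAt, add_sub_cancel_left, if_neg (show ¬ T + t < T by linarith)]

lemma concatAt_of_le (huv : v 0 = u T) (h : t ≤ T) : concatAt T u v t = u t := by
  rcases h.lt_or_eq with h | rfl
  · exact concatAt_of_lt h
  · simpa [huv] using concatAt_add (T := t) (u := u) (v := v) le_rfl

end Concatenation

section Trajectories

variable {E U : Type*} [NormedAddCommGroup E] [NormedSpace ℝ E] [MeasurableSpace U]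

/-- `p` solves `p' = F(p, α)` in integrated form on `[0, T]`, for a measurable control `α` with
values in `A`. The control is a function on all of `ℝ`, as in `IsControl`. -/
structure TrajOn (F : E → U → E) (A : Set U) (T : ℝ) (α : ℝ → U) (p : ℝ → E) : Prop where
  measurable : Measurable α
  mem : ∀ t, α t ∈ A
  intervalIntegrable : IntervalIntegrable (fun s ↦ F (p s) (α s)) volume 0 T
  eq_add_integral : ∀ t ∈ Icc 0 T, p t = p 0 + ∫ s in 0..t, F (p s) (α s)

namespace TrajOn

variable {F : E → U → E} {A : Set U} {S T T' : ℝ} {α β : ℝ → U} {p q : ℝ → E}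

lemma continuousOn (h : TrajOn F A T α p) (hT : 0 ≤ T) : ContinuousOn p (Icc 0 T) := by
  have hprim := intervalIntegral.continuousOn_primitive_interval' h.intervalIntegrable left_mem_uIcc
  rw [uIcc_of_le hT] at hprim
  exact (continuousOn_const.add hprim).congr h.eq_add_integral

lemma mono (h : TrajOn F A T α p) (hT' : 0 ≤ T') (hTT' : T' ≤ T) : TrajOn F A T' α p where
  measurable := h.measurable
  mem := h.mem
  intervalIntegrable := h.intervalIntegrable.mono_set (by
    rw [uIcc_of_le hT', uIcc_of_le (hT'.trans hTT')]
    exact Icc_subset_Icc_right hTT')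
  eq_add_integral t ht := h.eq_add_integral t ⟨ht.1, ht.2.trans hTT'⟩

lemma congr (h : TrajOn F A T α p) (hT : 0 ≤ T) (hβ : Measurable β) (hβA : ∀ t, β t ∈ A)
    (hαβ : ∀ t ∈ Ico 0 T, α t = β t) (hpq : ∀ t ∈ Icc 0 T, p t = q t) : TrajOn F A T β q := by
  have hFae : ∀ t ∈ Icc 0 T,
      ∀ᵐ s ∂volume.restrict (uIoc 0 t), F (p s) (α s) = F (q s) (β s) := by
    intro t ht
    rw [uIoc_of_le ht.1]
    have hne : ∀ᵐ s ∂volume.restrict (Ioc 0 t), s ≠ T := ae_restrict_of_ae (Measure.ae_ne _ T)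
    filter_upwards [hne, ae_restrict_mem measurableSet_Ioc] with s hsT hs
    have hs' : s ≤ T := hs.2.trans ht.2
    rw [hpq s ⟨hs.1.le, hs'⟩, hαβ s ⟨hs.1.le, hs'.lt_of_ne hsT⟩]
  refine ⟨hβ, hβA, h.intervalIntegrable.congr_ae (hFae T ⟨hT, le_rfl⟩), fun t ht ↦ ?_⟩
  rw [← hpq t ht, ← hpq 0 ⟨le_rfl, hT⟩, h.eq_add_integral t ht,
    intervalIntegral.integral_congr_ae_restrict (hFae t ht)]

lemma append (h₁ : TrajOn F A T α p) (hT : 0 ≤ T) (hS : 0 ≤ S)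
    (h₂ : TrajOn F A S (fun s ↦ α (T + s)) (fun s ↦ p (T + s))) : TrajOn F A (T + S) α p := by
  have hint : ∀ s ∈ Icc 0 S, IntervalIntegrable (fun s ↦ F (p s) (α s)) volume T (T + s) := by
    intro s hs
    simpa [add_comm] using (h₂.mono hs.1 hs.2).intervalIntegrable.comp_sub_right T
  refine ⟨h₁.measurable, h₁.mem, h₁.intervalIntegrable.trans (hint S ⟨hS, le_rfl⟩), fun t ht ↦ ?_⟩
  rcases le_total t T with htT | hTt
  · exact h₁.eq_add_integral t ⟨ht.1, htT⟩
  obtain ⟨s, rfl⟩ : ∃ s, t = T + s := ⟨t - T, by ring⟩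
  have hs : s ∈ Icc 0 S := ⟨by linarith, by linarith [ht.2]⟩
  have hshift :
      ∫ s' in 0..s, F (p (T + s')) (α (T + s')) = ∫ s' in T..(T + s), F (p s') (α s') := by
    simpa using intervalIntegral.integral_comp_add_left (fun s' ↦ F (p s') (α s')) T
      (a := 0) (b := s)
  have hpT := h₁.eq_add_integral T ⟨hT, le_rfl⟩
  have hps := h₂.eq_add_integral s hs
  simp only [add_zero, hshift] at hps
  rw [hps, hpT, add_assoc,
    intervalIntegral.integral_add_adjacent_intervals h₁.intervalIntegrable (hint s hs)]

lemma map_eq_add_integral {G : Type*} [NormedAddCommGroup G] [NormedSpace ℝ G] [CompleteSpace E]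
    [CompleteSpace G] (h : TrajOn F A T α p) (ℓ : E →L[ℝ] G) {t : ℝ} (ht : t ∈ Icc 0 T) :
    ℓ (p t) = ℓ (p 0) + ∫ s in 0..t, ℓ (F (p s) (α s)) := by
  rw [h.eq_add_integral t ht, map_add,
    ← ℓ.intervalIntegral_comp_comm (h.mono ht.1 ht.2).intervalIntegrable]

lemma norm_map_sub_le {G : Type*} [NormedAddCommGroup G] [NormedSpace ℝ G] [CompleteSpace E]
    [CompleteSpace G] (h : TrajOn F A T α p) (ℓ : E →L[ℝ] G) {C : ℝ}
    (hC : ∀ z, ∀ a ∈ A, ‖ℓ (F z a)‖ ≤ C) {t : ℝ} (ht : t ∈ Icc 0 T) :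
    ‖ℓ (p t) - ℓ (p 0)‖ ≤ C * t := by
  rw [h.map_eq_add_integral ℓ ht, add_sub_cancel_left]
  simpa [abs_of_nonneg ht.1] using
    intervalIntegral.norm_integral_le_of_norm_le_const (a := 0) (b := t) fun s _ ↦
      hC (p s) (α s) (h.mem s)

lemma reverse (h : TrajOn F A T α p) (hT : 0 ≤ T) :
    TrajOn (-F) A T (fun t ↦ α (T - t)) (fun t ↦ p (T - t)) where
  measurable := h.measurable.comp (measurable_const.sub measurable_id)
  mem t := h.mem _
  intervalIntegrable := by
    have hflip := (h.intervalIntegrable.comp_sub_left T).neg.symm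
    rwa [sub_zero, sub_self] at hflip
  eq_add_integral t ht := by
    have hT' : T - t ∈ Icc 0 T := ⟨by linarith [ht.2], by linarith [ht.1]⟩
    have hflip := intervalIntegral.integral_comp_sub_left (a := 0) (b := t)
      (fun s ↦ F (p s) (α s)) T
    have hleft := (h.mono hT'.1 hT'.2).intervalIntegrable
    simp only [Pi.neg_apply, intervalIntegral.integral_neg, hflip, sub_zero]
    rw [h.eq_add_integral _ hT', h.eq_add_integral T ⟨hT, le_rfl⟩,
      ← intervalIntegral.integral_add_adjacent_intervals hleft
        (hleft.symm.trans h.intervalIntegrable)]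
    abel

lemma of_hasDerivWithinAt {a : U} (ha : a ∈ A) (hF : Continuous fun z ↦ F z a) [CompleteSpace E]
    (hT : 0 ≤ T) (hp : ∀ t ∈ Icc 0 T, HasDerivWithinAt p (F (p t) a) (Icc 0 T) t) :
    TrajOn F A T (fun _ ↦ a) p := by
  have hpc : ContinuousOn p (Icc 0 T) := fun t ht ↦ (hp t ht).continuousWithinAt
  have hint : ∀ t ∈ Icc 0 T, IntervalIntegrable (fun s ↦ F (p s) a) volume 0 t := fun t ht ↦
    ((hF.comp_continuousOn hpc).mono (Icc_subset_Icc_right ht.2)).intervalIntegrable_of_Icc ht.1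
  refine ⟨measurable_const, fun _ ↦ ha, hint T ⟨hT, le_rfl⟩, fun t ht ↦ ?_⟩
  have hsub : Icc 0 t ⊆ Icc 0 T := Icc_subset_Icc_right ht.2
  rw [intervalIntegral.integral_eq_sub_of_hasDerivAt_of_le ht.1 (hpc.mono hsub)
    (fun s hs ↦ (hp s (hsub (Ioo_subset_Icc_self hs))).hasDerivAt
      (Icc_mem_nhds hs.1 (hs.2.trans_le ht.2))) (hint t ht)]
  abel

lemma concat (h₁ : TrajOn F A T α p) (hT : 0 ≤ T) (h₂ : TrajOn F A S β q) (hS : 0 ≤ S)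
    (hpq : q 0 = p T) : TrajOn F A (T + S) (concatAt T α β) (concatAt T p q) := by
  have hmeas : Measurable (concatAt T α β) :=
    Measurable.ite measurableSet_Iio h₁.measurable (h₂.measurable.comp (measurable_id.sub_const T))
  have hmem : ∀ t, concatAt T α β t ∈ A := by
    intro t
    unfold concatAt
    split_ifs
    exacts [h₁.mem _, h₂.mem _]
  refine append (h₁.congr hT hmeas hmem (fun t ht ↦ (concatAt_of_lt ht.2).symm)
    fun t ht ↦ (concatAt_of_le hpq ht.2).symm) hT hS ?_
  exact h₂.congr hS (hmeas.comp (measurable_const_add T)) (fun _ ↦ hmem _)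
    (fun t ht ↦ (concatAt_add ht.1).symm) fun t ht ↦ (concatAt_add ht.1).symm

end TrajOn

/-- Some control with values in `A` steers `F` from `x` to `y` in time `T` inside `K`. -/
def SteersWithin (F : E → U → E) (A : Set U) (K : Set E) (T : ℝ) (x y : E) : Prop :=
  ∃ (α : ℝ → U) (p : ℝ → E), TrajOn F A T α p ∧ (∀ t ∈ Icc 0 T, p t ∈ K) ∧ p 0 = x ∧ p T = y

lemma SteersWithin.reverse {F : E → U → E} {A : Set U} {K : Set E} {T : ℝ} {x y : E}
    (h : SteersWithin F A K T x y) (hT : 0 ≤ T) : SteersWithin (-F) A K T y x := by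
  obtain ⟨α, p, hp, hpK, rfl, rfl⟩ := h
  refine ⟨_, _, hp.reverse hT, fun t ht ↦ hpK _ ⟨by linarith [ht.2], by linarith [ht.1]⟩, ?_, ?_⟩
  · simp only [sub_zero]
  · simp only [sub_self]

end Trajectories

section Euler

variable {E : Type*} [NormedAddCommGroup E] [NormedSpace ℝ E] {φ : E → E} {L : ℝ≥0} {τ : ℝ}

lemma exists_hasDerivWithinAt_Icc_of_lipschitzWith [CompleteSpace E] (hφ : LipschitzWith L φ)
    (hτ : 0 ≤ τ) (hLτ : L * τ ≤ 1 / 2) (x : E) :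
    ∃ p : ℝ → E, p 0 = x ∧ ∀ t ∈ Icc 0 τ, HasDerivWithinAt p (φ (p t)) (Icc 0 τ) t := by
  lift τ to ℝ≥0 using hτ
  have hbound : ∀ y ∈ closedBall x (2 * ‖φ x‖₊ * τ : ℝ≥0), ‖φ y‖ ≤ (2 * ‖φ x‖₊ : ℝ≥0) := by
    intro y hy
    have hdist : ‖φ y - φ x‖ ≤ L * ‖y - x‖ := hφ.norm_sub_le y x
    have hyx : ‖y - x‖ ≤ 2 * ‖φ x‖ * τ := by simpa [dist_eq_norm] using hy
    calc ‖φ y‖ ≤ ‖φ x‖ + ‖φ y - φ x‖ := norm_le_norm_add_norm_sub' _ _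
      _ ≤ ‖φ x‖ + L * (2 * ‖φ x‖ * τ) := by gcongr; exact hdist.trans (by gcongr)
      _ = ‖φ x‖ + 2 * ‖φ x‖ * (L * τ) := by ring
      _ ≤ ‖φ x‖ + 2 * ‖φ x‖ * (1 / 2) := by gcongr
      _ = (2 * ‖φ x‖₊ : ℝ≥0) := by push_cast; ring
  exact (IsPicardLindelof.of_time_independent (t₀ := ⟨0, le_rfl, τ.2⟩) (r := 0) hbound
    hφ.lipschitzOnWith (by simp)).exists_eq_forall_mem_Icc_hasDerivWithinAt₀

lemma gronwallBound_zero_mul_le {K c t : ℝ} (hK : 0 ≤ K) (ht : 0 ≤ t) (hKt : K * t ≤ 1)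
    (hc : 0 ≤ c) : gronwallBound 0 K (K * c) t ≤ 2 * K * t * c := by
  rcases eq_or_ne K 0 with rfl | hK0
  · simp [gronwallBound_ε0]
  have hexp : Real.exp (K * t) - 1 ≤ 2 * (K * t) := by
    have habs : |K * t| = K * t := abs_of_nonneg (mul_nonneg hK ht)
    have hsmall := Real.abs_exp_sub_one_le (habs.trans_le hKt)
    exact (le_abs_self _).trans (hsmall.trans_eq (by rw [habs]))
  calc gronwallBound 0 K (K * c) t = c * (Real.exp (K * t) - 1) := by
        simp only [gronwallBound_of_K_ne_0 hK0, zero_mul, zero_add, mul_div_cancel_left₀ c hK0]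
    _ ≤ c * (2 * (K * t)) := by gcongr
    _ = 2 * K * t * c := by ring

lemma norm_sub_euler_le (hφ : LipschitzWith L φ) (hLτ : L * τ ≤ 1) {p : ℝ → E}
    (hp : ∀ t ∈ Icc 0 τ, HasDerivWithinAt p (φ (p t)) (Icc 0 τ) t) {t : ℝ} (ht : t ∈ Icc 0 τ) :
    ‖p t - p 0 - t • φ (p 0)‖ ≤ 2 * L * ‖φ (p 0)‖ * t ^ 2 := by
  set c := ‖φ (p 0)‖
  set e : ℝ → E := fun s ↦ p s - p 0 - s • φ (p 0)
  have hderiv : ∀ s ∈ Icc 0 τ, HasDerivWithinAt e (φ (p s) - φ (p 0)) (Icc 0 τ) s := fun s hs ↦ by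
    have hlin := (hasDerivWithinAt_id s (Icc 0 τ)).smul_const (φ (p 0))
    rw [one_smul] at hlin
    exact ((hp s hs).sub_const (p 0)).sub hlin
  have hgrowth : ∀ s ∈ Ico 0 t, ‖φ (p s) - φ (p 0)‖ ≤ L * ‖e s‖ + L * (t * c) := by
    intro s hs
    have hsc : ‖s • φ (p 0)‖ ≤ t * c := by
      rw [norm_smul, Real.norm_of_nonneg hs.1]
      gcongr
      exact hs.2.le
    calc ‖φ (p s) - φ (p 0)‖ ≤ L * ‖p s - p 0‖ := hφ.norm_sub_le _ _
      _ = L * ‖e s + s • φ (p 0)‖ := by simp only [e, sub_add_cancel]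
      _ ≤ L * (‖e s‖ + t * c) := by gcongr; exact (norm_add_le _ _).trans (by gcongr)
      _ = L * ‖e s‖ + L * (t * c) := mul_add _ _ _
  have hgronwall := norm_le_gronwallBound_of_norm_deriv_right_le (f := e)
    (δ := 0) (K := L) (ε := L * (t * c)) (a := 0) (b := t)
    (fun s hs ↦ ((hderiv s (Icc_subset_Icc_right ht.2 hs)).mono
      (Icc_subset_Icc_right ht.2)).continuousWithinAt)
    (fun s hs ↦ (hderiv s ⟨hs.1, hs.2.le.trans ht.2⟩).mono_of_mem_nhdsWithin
      (Icc_mem_nhdsGE_of_mem ⟨hs.1, hs.2.trans_le ht.2⟩)) (by simp [e]) hgrowth t ⟨ht.1, le_rfl⟩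
  rw [sub_zero] at hgronwall
  have hLt : L * t ≤ 1 := le_trans (by gcongr; exact ht.2) hLτ
  calc ‖e t‖ ≤ 2 * L * t * (t * c) := hgronwall.trans <|
        gronwallBound_zero_mul_le L.2 ht.1 hLt (mul_nonneg ht.1 (norm_nonneg _))
    _ = 2 * L * c * t ^ 2 := by ring

end Euler

section SampledFeedback

variable {E U : Type*} [NormedAddCommGroup E] [NormedSpace ℝ E]
  [MeasurableSpace U] {F : E → U → E} {A : Set U} {L : ℝ≥0} {τ : ℝ}

/-- Concatenation of countably many functions, the `n`-th one being used, with its own clock, on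
`[nτ, (n+1)τ)`. -/
def concatSeq {X : Type*} (τ : ℝ) (u : ℕ → ℝ → X) (t : ℝ) : X :=
  u ⌊t / τ⌋₊ (t - ⌊t / τ⌋₊ * τ)

lemma concatSeq_add {X : Type*} (u : ℕ → ℝ → X) (n : ℕ) {s : ℝ} (hs : s ∈ Ico 0 τ) :
    concatSeq τ u (n * τ + s) = u n s := by
  have hτ : 0 < τ := hs.1.trans_lt hs.2
  have hfloor : ⌊(n * τ + s) / τ⌋₊ = n := by
    rw [Nat.floor_eq_iff (by have := hs.1; positivity), le_div_iff₀ hτ, div_lt_iff₀ hτ]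
    constructor <;> nlinarith [hs.1, hs.2]
  simp only [concatSeq, hfloor, add_sub_cancel_left]

lemma concatSeq_add_of_mem_Icc {X : Type*} {u : ℕ → ℝ → X} (hu : ∀ n, u (n + 1) 0 = u n τ)
    (n : ℕ) {s : ℝ} (hτ : 0 < τ) (hs : s ∈ Icc 0 τ) : concatSeq τ u (n * τ + s) = u n s := by
  rcases hs.2.lt_or_eq with hsτ | rfl
  · exact concatSeq_add u n ⟨hs.1, hsτ⟩
  · have := concatSeq_add u (n + 1) (s := 0) ⟨le_rfl, hτ⟩
    rwa [add_zero, Nat.cast_succ, add_one_mul, hu n] at this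

lemma trajOn_concatSeq {u : ℕ → U} {p : ℕ → ℝ → E} (hτ : 0 < τ) (hu : ∀ n, u n ∈ A)
    (hp : ∀ n, TrajOn F A τ (fun _ ↦ u n) (p n)) (hjoin : ∀ n, p (n + 1) 0 = p n τ)
    {T : ℝ} (hT : 0 ≤ T) :
    TrajOn F A T (concatSeq τ fun n _ ↦ u n) (concatSeq τ p) := by
  have hmeas : Measurable (concatSeq τ fun n _ ↦ u n) :=
    (measurable_from_nat (f := u)).comp (Nat.measurable_floor.comp (measurable_id.div_const τ))
  have hmem : ∀ t, concatSeq τ (fun n _ ↦ u n) t ∈ A := fun t ↦ hu _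
  have hgrid : ∀ n : ℕ, TrajOn F A (n * τ) (concatSeq τ fun n _ ↦ u n)
      (concatSeq τ p) := by
    intro n
    induction n with
    | zero => exact ⟨hmeas, hmem, by simp, fun t ht ↦ by
        obtain rfl : t = 0 := le_antisymm (by simpa using ht.2) ht.1
        simp⟩
    | succ n ih =>
      rw [Nat.cast_succ, add_one_mul]
      exact ih.append (by positivity) hτ.le <| (hp n).congr hτ.le
        (hmeas.comp (measurable_const_add _)) (fun _ ↦ hmem _)
        (fun s hs ↦ (concatSeq_add (fun n _ ↦ u n) n hs).symm)
        (fun s hs ↦ (concatSeq_add_of_mem_Icc hjoin n hτ hs).symm)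
  obtain ⟨n, hn⟩ := exists_nat_ge (T / τ)
  exact (hgrid n).mono hT ((div_le_iff₀ hτ).1 hn)

/-- Sample-and-hold: the control `κ n` of the `n`-th sampling instant is evaluated at the current
state and held for the time `τ`. -/
lemma exists_sampledFeedback_trajOn [CompleteSpace E]
    (hF : ∀ a ∈ A, LipschitzWith L fun z ↦ F z a) (hτ : 0 < τ)
    (hLτ : L * τ ≤ 1 / 2) {κ : ℕ → E → U} (hκ : ∀ n z, κ n z ∈ A) (x : E) :
    ∃ (α : ℝ → U) (q : ℝ → E), q 0 = x ∧ (∀ T, 0 ≤ T → TrajOn F A T α q) ∧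
      ∀ n : ℕ, ∀ t ∈ Icc 0 τ,
        ‖q (n * τ + t) - q (n * τ) - t • F (q (n * τ)) (κ n (q (n * τ)))‖ ≤
          2 * L * ‖F (q (n * τ)) (κ n (q (n * τ)))‖ * t ^ 2 := by
  choose hold hold_zero hold_deriv using fun (n : ℕ) (z : E) ↦
    exists_hasDerivWithinAt_Icc_of_lipschitzWith (hF _ (hκ n z)) hτ.le hLτ z
  let node : ℕ → E := Nat.rec x fun n z ↦ hold n z τ
  let p : ℕ → ℝ → E := fun n ↦ hold n (node n)
  have hjoin : ∀ n, p (n + 1) 0 = p n τ := fun n ↦ hold_zero _ _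
  have hp : ∀ n : ℕ, ∀ t ∈ Icc 0 τ, concatSeq τ p (n * τ + t) = p n t := fun n t ht ↦
    concatSeq_add_of_mem_Icc hjoin n hτ ht
  have hnode : ∀ n : ℕ, concatSeq τ p (n * τ) = node n := fun n ↦ by
    simpa [p, hold_zero] using hp n 0 ⟨le_rfl, hτ.le⟩
  refine ⟨_, concatSeq τ p, by simpa [node] using hnode 0, fun T hT ↦ trajOn_concatSeq hτ
    (fun n ↦ hκ n (node n)) (fun n ↦ .of_hasDerivWithinAt (hκ n _) (hF _ (hκ n _)).continuous hτ.le
      (hold_deriv n (node n))) hjoin hT, fun n t ht ↦ ?_⟩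
  have heuler := norm_sub_euler_le (hF _ (hκ n (node n))) (hLτ.trans (by norm_num))
    (hold_deriv n (node n)) ht
  rw [hp n t ht, hnode n]
  simpa only [p, hold_zero] using heuler

end SampledFeedback

section Controllability

variable {Y U Z : Type*} [NormedAddCommGroup Y] [InnerProductSpace ℝ Y] {A : Set U} {r : ℝ}

lemma exists_half_mul_norm_le_inner {S : Set Y} (hr : 0 < r)
    (hS : ball (0 : Y) r ⊆ closure (convexHull ℝ S)) (u : Y) :
    ∃ v ∈ S, r / 2 * ‖u‖ ≤ ⟪u, v⟫ := by
  have hne : S.Nonempty := by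
    rw [← convexHull_nonempty_iff (𝕜 := ℝ), ← closure_nonempty_iff]
    exact ⟨0, hS (mem_ball_self hr)⟩
  rcases eq_or_ne u 0 with rfl | hu
  · exact hne.imp fun v hv ↦ ⟨hv, by simp⟩
  by_contra! hlt
  have hhalf : closure (convexHull ℝ S) ⊆ {v | ⟪u, v⟫ ≤ r / 2 * ‖u‖} :=
    closure_minimal (convexHull_min (fun v hv ↦ (hlt v hv).le)
      (convex_halfSpace_le (innerSL ℝ u).toLinearMap.isLinear _))
      (isClosed_le (by fun_prop) continuous_const)
  have hu' : 0 < ‖u‖ := norm_pos_iff.2 hu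
  have hball : (3 / 4 * r / ‖u‖) • u ∈ ball (0 : Y) r := by
    rw [mem_ball_zero_iff, norm_smul, Real.norm_of_nonneg (by positivity),
      div_mul_cancel₀ _ hu'.ne']
    linarith
  have hle : ⟪u, (3 / 4 * r / ‖u‖) • u⟫ ≤ r / 2 * ‖u‖ := hhalf (hS hball)
  rw [inner_smul_right, real_inner_self_eq_norm_mul_norm, ← mul_assoc,
    div_mul_cancel₀ _ hu'.ne'] at hle
  nlinarith

lemma exists_finite_half_mul_norm_le_inner [ProperSpace Y] [TopologicalSpace Z] {g : Z → U → Y}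
    {K : Set Z} (hK : IsCompact K) (hg : ∀ a ∈ A, Continuous fun z ↦ g z a) (hr : 0 < r)
    (hpush : ∀ z ∈ K, ∀ u, ∃ a ∈ A, r * ‖u‖ ≤ ⟪u, g z a⟫) :
    ∃ S ⊆ A, S.Finite ∧ ∀ z ∈ K, ∀ u, ∃ a ∈ S, r / 2 * ‖u‖ ≤ ⟪u, g z a⟫ := by
  rcases K.eq_empty_or_nonempty with rfl | ⟨z₀, hz₀⟩
  · exact ⟨∅, empty_subset _, finite_empty, by simp⟩
  obtain ⟨b, hb, -⟩ := hpush z₀ hz₀ 0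
  obtain ⟨S, hSA, hSfin, hScover⟩ :=
    (hK.prod (isCompact_sphere (0 : Y) 1)).elim_finite_subcover_image (b := A)
    (c := fun a ↦ {p : Z × Y | r / 2 < ⟪p.2, g p.1 a⟫})
    (fun a ha ↦ isOpen_lt continuous_const
      (continuous_snd.inner ((hg a ha).comp continuous_fst)))
    (fun p hp ↦ by
      obtain ⟨a, ha, hpa⟩ := hpush p.1 hp.1 p.2
      rw [mem_sphere_zero_iff_norm.1 hp.2, mul_one] at hpa
      exact mem_biUnion ha ((half_lt_self hr).trans_le hpa))
  refine ⟨insert b S, insert_subset hb hSA, hSfin.insert b, fun z hz u ↦ ?_⟩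
  rcases eq_or_ne u 0 with rfl | hu
  · exact ⟨b, mem_insert b S, by simp⟩
  have hu' : 0 < ‖u‖ := norm_pos_iff.2 hu
  have hmem : (z, ‖u‖⁻¹ • u) ∈ K ×ˢ sphere (0 : Y) 1 :=
    ⟨hz, by simp [norm_smul, hu'.ne']⟩
  obtain ⟨a, ha, hza⟩ := mem_iUnion₂.1 (hScover hmem)
  refine ⟨a, mem_insert_of_mem b ha, ?_⟩
  rw [mem_ofPred_eq, real_inner_smul_left, lt_inv_mul_iff₀ hu', mul_comm] at hza
  exact hza.le

lemma exists_bounded_half_mul_norm_le_inner [ProperSpace Y] [TopologicalSpace Z] {g : Z → U → Y}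
    {K : Set Z} (hK : IsCompact K) (hg : ∀ a ∈ A, Continuous fun z ↦ g z a) (hr : 0 < r)
    (hpush : ∀ z ∈ K, ∀ u, ∃ a ∈ A, r * ‖u‖ ≤ ⟪u, g z a⟫) :
    ∃ G, ∀ z ∈ K, ∀ u, ∃ a ∈ A, r / 2 * ‖u‖ ≤ ⟪u, g z a⟫ ∧ ‖g z a‖ ≤ G := by
  obtain ⟨S, hSA, hSfin, hS⟩ := exists_finite_half_mul_norm_le_inner hK hg hr hpush
  have hbdd : Bornology.IsBounded (⋃ a ∈ S, (fun z ↦ g z a) '' K) :=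
    (Bornology.isBounded_biUnion hSfin).2 fun a ha ↦ (hK.image (hg a (hSA ha))).isBounded
  obtain ⟨G, hG⟩ := hbdd.exists_norm_le
  refine ⟨G, fun z hz u ↦ ?_⟩
  obtain ⟨a, ha, hau⟩ := hS z hz u
  exact ⟨a, hSA ha, hau, hG _ (mem_biUnion ha (mem_image_of_mem _ hz))⟩

end Controllability

section Greedy

variable {Y : Type*} [NormedAddCommGroup Y] [InnerProductSpace ℝ Y]

lemma norm_add_le_of_inner_le {e d : Y} {δ κ : ℝ} (hκ : 0 ≤ κ) (he : ‖e‖ ≤ δ)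
    (hed : ⟪e, d⟫ ≤ -(κ * ‖e‖)) (hd : ‖d‖ ≤ δ / 2) (hd2 : ‖d‖ ^ 2 ≤ κ * δ) : ‖e + d‖ ≤ δ := by
  rcases le_total ‖e‖ (δ / 2) with hsmall | hlarge
  · linarith [norm_add_le e d]
  have hδ : 0 ≤ δ := (norm_nonneg e).trans he
  refine abs_le_of_sq_le_sq' ?_ hδ |>.2
  have hκe : κ * (δ / 2) ≤ κ * ‖e‖ := by gcongr
  have he2 : ‖e‖ ^ 2 ≤ δ ^ 2 := by gcongr
  linarith [norm_add_sq_real e d]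

/-- A push towards the moving target `c` compensates, to first order, the motion of the target and
the second-order error `C * t ^ 2` of an Euler step. -/
lemma norm_sub_le_of_push {y y' c c' w : Y} {δ ρ G C t : ℝ} (hρ : 0 < ρ) (ht : 0 ≤ t)
    (hyc : ‖y - c‖ ≤ δ) (hpush : ρ * ‖c - y‖ ≤ ⟪c - y, w⟫) (hw : ‖w‖ ≤ G)
    (hcc' : ‖c' - c‖ ≤ ρ / 4 * t) (hyy' : ‖y' - y - t • w‖ ≤ C * t ^ 2)
    (hC : C * t ≤ ρ / 4) (hδ : (G + ρ) ^ 2 * t ≤ ρ / 2 * δ) : ‖y' - c'‖ ≤ δ := by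
  have hG : 0 ≤ G := (norm_nonneg w).trans hw
  set s : Y := (y' - y - t • w) - (c' - c) with hs_def
  have hs : ‖s‖ ≤ ρ / 2 * t :=
    calc ‖s‖ ≤ C * t ^ 2 + ρ / 4 * t := (norm_sub_le _ _).trans (add_le_add hyy' hcc')
      _ = C * t * t + ρ / 4 * t := by ring
      _ ≤ ρ / 4 * t + ρ / 4 * t := by gcongr
      _ = ρ / 2 * t := by ring
  have hd : ‖t • w + s‖ ≤ (G + ρ) * t :=
    calc ‖t • w + s‖ ≤ t * G + ρ / 2 * t := by
          refine (norm_add_le _ _).trans (add_le_add ?_ hs)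
          rw [norm_smul, Real.norm_of_nonneg ht]
          gcongr
      _ ≤ (G + ρ) * t := by nlinarith
  have hd2 : ‖t • w + s‖ ^ 2 ≤ ρ / 2 * t * δ :=
    calc ‖t • w + s‖ ^ 2 ≤ ((G + ρ) * t) ^ 2 := by gcongr
      _ = (G + ρ) ^ 2 * t * t := by ring
      _ ≤ ρ / 2 * δ * t := by gcongr
      _ = ρ / 2 * t * δ := by ring
  have hdδ : (G + ρ) * t ≤ δ / 2 := by
    have : (G + ρ) * ((G + ρ) * t) ≤ (G + ρ) * (δ / 2) := by
      nlinarith [mul_nonneg hG ((norm_nonneg _).trans hyc)]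
    exact le_of_mul_le_mul_left this (by positivity)
  have hinner : ⟪y - c, t • w + s⟫ ≤ -(ρ / 2 * t * ‖y - c‖) := by
    have hw' : ⟪y - c, t • w⟫ ≤ -(t * (ρ * ‖y - c‖)) := by
      rw [← neg_sub c y, inner_neg_left, real_inner_smul_right, norm_neg]
      gcongr
    have hs' : ⟪y - c, s⟫ ≤ ‖y - c‖ * (ρ / 2 * t) :=
      (real_inner_le_norm _ _).trans (by gcongr)
    rw [inner_add_right]
    linarith
  have hsum : y' - c' = (y - c) + (t • w + s) := by rw [hs_def]; abel
  rw [hsum]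
  exact norm_add_le_of_inner_le (by positivity) hyc hinner (hd.trans hdδ) hd2

end Greedy

lemma eventually_mul_le (c : ℝ) {d : ℝ} (hd : 0 < d) : ∀ᶠ t in 𝓝[>] (0 : ℝ), c * t ≤ d :=
  nhdsWithin_le_nhds <| (Continuous.tendsto' (by fun_prop) 0 0 (mul_zero c)).eventually_le_const hd

lemma forall_mem_Icc_of_forall_grid_step {P : ℝ → Prop} {τ T : ℝ} (hτ : 0 < τ) (h0 : P 0)
    (hstep : ∀ n : ℕ, n * τ ≤ T → P (n * τ) → ∀ t ∈ Icc 0 τ, P (n * τ + t)) :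
    ∀ t ∈ Icc 0 T, P t := by
  have hgrid : ∀ n : ℕ, n * τ ≤ T → P (n * τ) := by
    intro n
    induction n with
    | zero => simpa using fun _ ↦ h0
    | succ n ih =>
      rw [Nat.cast_succ, add_one_mul]
      intro hn
      exact hstep n (by linarith) (ih (by linarith)) τ ⟨hτ.le, le_rfl⟩
  intro t ht
  have hfloor : ⌊t / τ⌋₊ * τ ≤ t := (le_div_iff₀ hτ).1 (Nat.floor_le (div_nonneg ht.1 hτ.le))
  have hfloor' : t < (⌊t / τ⌋₊ + 1) * τ := (div_lt_iff₀ hτ).1 (Nat.lt_floor_add_one _)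
  simpa using hstep ⌊t / τ⌋₊ (hfloor.trans ht.2) (hgrid _ (hfloor.trans ht.2))
    (t - ⌊t / τ⌋₊ * τ) ⟨by linarith, by linarith⟩

section SlowFast

variable {X Y U : Type*} [NormedAddCommGroup X] [NormedAddCommGroup Y]

/-- The right-hand side `(ε f, g)` of the dynamics `(CD_ε)`, as a controlled vector field on the
product space. -/
def slowFast [NormedSpace ℝ X] (f : X → Y → U → X) (g : X → Y → U → Y) (ε : ℝ) (z : X × Y)
    (a : U) : X × Y :=
  (ε • f z.1 z.2 a, g z.1 z.2 a)

lemma slowFast_neg [NormedSpace ℝ X] (f : X → Y → U → X) (g : X → Y → U → Y) (ε : ℝ) :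
    slowFast (-f) (-g) ε = -slowFast f g ε := by
  ext z a <;> simp [slowFast]

variable [InnerProductSpace ℝ Y]

/-- The standing assumptions (H2) and (H3) on `(CD_ε)`, with `L` a Lipschitz constant for the
maximum norm on the product. Controllability (H3) is encoded dually: locally uniformly, some
control pushes the fast variable at speed at least `r` in any prescribed direction `u`. -/
structure IsSlowFastSystem (A : Set U) (f : X → Y → U → X) (g : X → Y → U → Y) (L : ℝ≥0)
    (Q : ℝ) : Prop where
  lipschitz_slow : ∀ a ∈ A, LipschitzWith L fun z : X × Y ↦ f z.1 z.2 a
  lipschitz_fast : ∀ a ∈ A, LipschitzWith L fun z : X × Y ↦ g z.1 z.2 a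
  norm_slow_le : ∀ x y, ∀ a ∈ A, ‖f x y a‖ ≤ Q
  exists_push : ∀ K : Set (X × Y), IsCompact K →
    ∃ r > 0, ∀ z ∈ K, ∀ u, ∃ a ∈ A, r * ‖u‖ ≤ ⟪u, g z.1 z.2 a⟫

namespace IsSlowFastSystem

variable {A : Set U} {f : X → Y → U → X} {g : X → Y → U → Y} {L : ℝ≥0} {Q ε : ℝ}

lemma neg (h : IsSlowFastSystem A f g L Q) : IsSlowFastSystem A (-f) (-g) L Q where
  lipschitz_slow a ha := (h.lipschitz_slow a ha).neg
  lipschitz_fast a ha := (h.lipschitz_fast a ha).neg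
  norm_slow_le x y a ha := by simpa using h.norm_slow_le x y a ha
  exists_push K hK := by
    obtain ⟨r, hr, hpush⟩ := h.exists_push K hK
    refine ⟨r, hr, fun z hz u ↦ (hpush z hz (-u)).imp fun a ha ↦ ⟨ha.1, ?_⟩⟩
    simpa using ha.2

lemma nonempty (h : IsSlowFastSystem A f g L Q) : A.Nonempty := by
  obtain ⟨r, -, hpush⟩ := h.exists_push {0} isCompact_singleton
  obtain ⟨a, ha, -⟩ := hpush 0 rfl 0
  exact ⟨a, ha⟩

lemma bound_nonneg (h : IsSlowFastSystem A f g L Q) : 0 ≤ Q :=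
  let ⟨a, ha⟩ := h.nonempty
  (norm_nonneg _).trans (h.norm_slow_le 0 0 a ha)

lemma exists_greedy [ProperSpace Y] (h : IsSlowFastSystem A f g L Q) {K : Set (X × Y)}
    (hK : IsCompact K) : ∃ ρ > 0, ∃ G, ∃ κ : X × Y → Y → U, (∀ z u, κ z u ∈ A) ∧
      ∀ z ∈ K, ∀ u, ρ * ‖u‖ ≤ ⟪u, g z.1 z.2 (κ z u)⟫ ∧ ‖g z.1 z.2 (κ z u)‖ ≤ G := by
  obtain ⟨r, hr, hpush⟩ := h.exists_push K hK
  obtain ⟨G, hG⟩ := exists_bounded_half_mul_norm_le_inner hK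
    (fun a ha ↦ (h.lipschitz_fast a ha).continuous) hr hpush
  obtain ⟨b, hb⟩ := h.nonempty
  have hκ : ∀ z u, ∃ a ∈ A, z ∈ K →
      r / 2 * ‖u‖ ≤ ⟪u, g z.1 z.2 a⟫ ∧ ‖g z.1 z.2 a‖ ≤ G := by
    intro z u
    by_cases hz : z ∈ K
    · exact (hG z hz u).imp fun a ha ↦ ⟨ha.1, fun _ ↦ ha.2⟩
    · exact ⟨b, hb, fun hz' ↦ absurd hz' hz⟩
  choose κ hκA hκ using hκ
  exact ⟨r / 2, by positivity, G, κ, hκA, fun z hz u ↦ hκ z u hz⟩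

variable [NormedSpace ℝ X]

lemma norm_smul_slow_le (h : IsSlowFastSystem A f g L Q) (hε : 0 ≤ ε) {a : U} (ha : a ∈ A)
    (z : X × Y) : ‖(slowFast f g ε z a).1‖ ≤ ε * Q := by
  rw [slowFast, norm_smul, Real.norm_of_nonneg hε]
  gcongr
  exact h.norm_slow_le _ _ a ha

lemma lipschitzWith_slowFast (h : IsSlowFastSystem A f g L Q) (hε : ε ∈ Ioc 0 1) {a : U}
    (ha : a ∈ A) : LipschitzWith L fun z ↦ slowFast f g ε z a := by
  have hslow : LipschitzWith L fun z : X × Y ↦ ε • f z.1 z.2 a := by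
    refine ((lipschitzWith_smul ε).comp (h.lipschitz_slow a ha)).weaken ?_
    exact mul_le_of_le_one_left' (by simpa [← NNReal.coe_le_coe, abs_of_pos hε.1] using hε.2)
  exact (hslow.prodMk (h.lipschitz_fast a ha)).weaken (max_self L).le

lemma norm_slowFast_le (h : IsSlowFastSystem A f g L Q) (hε : ε ∈ Ioc 0 1) {a : U} (ha : a ∈ A)
    {z : X × Y} {G : ℝ} (hG : ‖g z.1 z.2 a‖ ≤ G) : ‖slowFast f g ε z a‖ ≤ max Q G :=
  max_le_max ((h.norm_smul_slow_le hε.1.le ha z).trans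
    (mul_le_of_le_one_left h.bound_nonneg hε.2)) hG

variable [MeasurableSpace U] [CompleteSpace X] [ProperSpace Y]

lemma slow_mem_closedBall (h : IsSlowFastSystem A f g L Q) (hε : 0 ≤ ε) {T : ℝ} {α : ℝ → U}
    {q : ℝ → X × Y} (hq : TrajOn (slowFast f g ε) A T α q) {t : ℝ} (ht : t ∈ Icc 0 T) :
    (q t).1 ∈ closedBall (q 0).1 (ε * Q * t) := by
  rw [mem_closedBall_iff_norm]
  exact hq.norm_map_sub_le (ContinuousLinearMap.fst ℝ X Y)
    (fun z a ha ↦ h.norm_smul_slow_le hε ha z) ht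

/-- The greedy feedback pushes the fast variable towards the current position of the target `γ`;
sampled finely enough it keeps the distance to `γ` below `δ` as long as the tube around `γ` stays
in `K`. -/
lemma exists_tracking (h : IsSlowFastSystem A f g L Q) {K : Set (X × Y)} (hK : IsCompact K) :
    ∃ r : ℝ≥0, 0 < r ∧ ∀ δ > 0, ∀ ε ∈ Ioc (0 : ℝ) 1, ∀ (p : X × Y) (γ : ℝ → Y) (T : ℝ),
      LipschitzWith r γ → γ 0 = p.2 →
      (∀ t ∈ Icc 0 T, closedBall p.1 (ε * Q * t) ×ˢ closedBall (γ t) δ ⊆ K) →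
      ∃ (α : ℝ → U) (q : ℝ → X × Y), q 0 = p ∧
        (∀ S, 0 ≤ S → TrajOn (slowFast f g ε) A S α q) ∧
        ∀ t ∈ Icc 0 T, q t ∈ closedBall p.1 (ε * Q * t) ×ˢ closedBall (γ t) δ := by
  obtain ⟨ρ, hρ, G, κ, hκA, hκ⟩ := h.exists_greedy hK
  refine ⟨(ρ / 4).toNNReal, by positivity, fun δ hδ ε hε p γ T hγ hγ0 htube ↦ ?_⟩
  rw [lipschitzWith_iff_norm_sub_le, Real.coe_toNNReal _ (by positivity)] at hγ
  obtain ⟨τ, ⟨⟨hLτ, hCτ⟩, hGτ⟩, hτ : 0 < τ⟩ := (((eventually_mul_le L one_half_pos).and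
    (eventually_mul_le (2 * L * max Q G) (show 0 < ρ / 4 by positivity))).and
    (eventually_mul_le ((G + ρ) ^ 2) (show 0 < ρ / 2 * δ by positivity))).and
    self_mem_nhdsWithin |>.exists
  obtain ⟨α, q, rfl, hq, heuler⟩ := exists_sampledFeedback_trajOn
    (fun a ha ↦ h.lipschitzWith_slowFast hε ha) hτ hLτ
    (κ := fun n z ↦ κ z (γ (n * τ) - z.2)) (fun n z ↦ hκA z _) p
  have hslow : ∀ t, 0 ≤ t → (q t).1 ∈ closedBall (q 0).1 (ε * Q * t) := fun t ht ↦
    h.slow_mem_closedBall hε.1.le (hq t ht) ⟨ht, le_rfl⟩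
  refine ⟨α, q, rfl, hq, fun t ht ↦ ⟨hslow t ht.1, mem_closedBall_iff_norm.2 ?_⟩⟩
  refine forall_mem_Icc_of_forall_grid_step (P := fun t ↦ ‖(q t).2 - γ t‖ ≤ δ) hτ
    (by simp [hγ0, hδ.le]) (fun n hn hnode t ht ↦ ?_) t ht
  have hnτ : 0 ≤ n * τ := by positivity
  have hqK : q (n * τ) ∈ K := htube _ ⟨hnτ, hn⟩ ⟨hslow _ hnτ, mem_closedBall_iff_norm.2 hnode⟩
  obtain ⟨hpush, hgG⟩ := hκ _ hqK (γ (n * τ) - (q (n * τ)).2)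
  have hF := h.norm_slowFast_le hε (hκA _ _) hgG
  have hC : 0 ≤ 2 * L * max Q G := mul_nonneg (by positivity) (le_max_of_le_left h.bound_nonneg)
  refine norm_sub_le_of_push (C := 2 * L * max Q G) hρ ht.1 hnode hpush hgG ?_
    ((norm_snd_le _).trans <| (heuler n t ht).trans (by gcongr)) (le_trans ?_ hCτ)
    (le_trans ?_ hGτ)
  · simpa [abs_of_nonneg ht.1] using hγ (n * τ + t) (n * τ)
  · exact mul_le_mul_of_nonneg_left ht.2 hC
  · exact mul_le_mul_of_nonneg_left ht.2 (sq_nonneg _)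

end IsSlowFastSystem
end SlowFast

lemma exists_pos_smul_eq_norm_le {Y : Type*} [NormedAddCommGroup Y] [NormedSpace ℝ Y] (u : Y)
    {r : ℝ} (hr : 0 < r) : ∃ T : ℝ, 0 < T ∧ ∃ v : Y, T • v = u ∧ ‖v‖ ≤ r := by
  have hT : 0 < (‖u‖ + 1) / r := by positivity
  refine ⟨_, hT, ((‖u‖ + 1) / r)⁻¹ • u, smul_inv_smul₀ hT.ne' u, ?_⟩
  rw [norm_smul, norm_inv, Real.norm_of_nonneg hT.le, inv_mul_le_iff₀ hT,
    div_mul_cancel₀ _ hr.ne']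
  linarith

section Steering

variable {X Y U : Type*} [NormedAddCommGroup X] [NormedSpace ℝ X] [ProperSpace X]
  [NormedAddCommGroup Y] [InnerProductSpace ℝ Y] [ProperSpace Y] [MeasurableSpace U]
  {A : Set U} {f : X → Y → U → X} {g : X → Y → U → Y} {L : ℝ≥0} {Q : ℝ}

namespace IsSlowFastSystem

lemma exists_confined (h : IsSlowFastSystem A f g L Q) (x : X) (y : Y) (R : ℝ) :
    ∃ K, IsCompact K ∧ ∀ ε ∈ Ioc (0 : ℝ) 1, ∀ p ∈ closedBall x 1 ×ˢ closedBall y 1,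
      ∃ (α : ℝ → U) (q : ℝ → X × Y), q 0 = p ∧
        (∀ S, 0 ≤ S → TrajOn (slowFast f g ε) A S α q) ∧ ∀ t, 0 ≤ t → ε * t ≤ R → q t ∈ K := by
  have hK := (isCompact_closedBall x (1 + Q * R)).prod (isCompact_closedBall y 2)
  refine ⟨_, hK, fun ε hε p hp ↦ ?_⟩
  obtain ⟨r, -, htrack⟩ := h.exists_tracking hK
  have htube : ∀ t ∈ Icc 0 (R / ε), closedBall p.1 (ε * Q * t) ×ˢ closedBall p.2 1 ⊆
      closedBall x (1 + Q * R) ×ˢ closedBall y 2 := by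
    intro t ht
    have hεt : ε * t ≤ R := (le_div_iff₀' hε.1).1 ht.2
    have hQ : ε * Q * t ≤ Q * R := by
      nlinarith [mul_le_mul_of_nonneg_left hεt h.bound_nonneg]
    exact prod_mono (closedBall_subset_closedBall' (by linarith [mem_closedBall.1 hp.1]))
      (closedBall_subset_closedBall' (by linarith [mem_closedBall.1 hp.2]))
  obtain ⟨α, q, hq0, hq, hqt⟩ := htrack 1 one_pos ε hε p (fun _ ↦ p.2) (R / ε)
    (.const' _) rfl htube
  refine ⟨α, q, hq0, hq, fun t ht hεt ↦ ?_⟩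
  have htI : t ∈ Icc 0 (R / ε) := ⟨ht, (le_div_iff₀' hε.1).2 hεt⟩
  exact htube t htI (hqt t htI)

/-- In a fixed fast time the fast variable is steered from `y` to `z` by tracking the segment,
while the slow variable hardly moves. -/
lemma exists_approx_steering (h : IsSlowFastSystem A f g L Q) (x : X) (y z : Y) :
    ∃ T > 0, ∃ K, IsCompact K ∧ ∀ δ ∈ Ioc (0 : ℝ) 1, ∀ ε ∈ Ioc (0 : ℝ) 1, Q * T * ε ≤ δ →
      ∀ p ∈ closedBall x δ ×ˢ closedBall y δ, ∃ p' ∈ closedBall x (2 * δ) ×ˢ closedBall z (2 * δ),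
        SteersWithin (slowFast f g ε) A K T p p' := by
  have hK := (isCompact_closedBall x 2).prod (isCompact_closedBall y (‖z - y‖ + 2))
  obtain ⟨r, hr, htrack⟩ := h.exists_tracking hK
  obtain ⟨T, hT, v, hTv, hv⟩ := exists_pos_smul_eq_norm_le (z - y) hr
  refine ⟨T, hT, _, hK, fun δ hδ ε hε hεT p ⟨hpx, hpy⟩ ↦ ?_⟩
  rw [mem_closedBall] at hpx hpy
  have hslow : ∀ t ∈ Icc 0 T, ε * Q * t ≤ δ := fun t ht ↦ by
    nlinarith [mul_le_mul_of_nonneg_left ht.2 (mul_nonneg hε.1.le h.bound_nonneg)]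
  have htube : ∀ t ∈ Icc 0 T, closedBall p.1 (ε * Q * t) ×ˢ closedBall (p.2 + t • v) δ ⊆
      closedBall x 2 ×ˢ closedBall y (‖z - y‖ + 2) := by
    intro t ht
    have htv : dist (p.2 + t • v) p.2 ≤ ‖z - y‖ := by
      rw [dist_self_add_left, ← hTv, norm_smul, norm_smul, Real.norm_of_nonneg ht.1,
        Real.norm_of_nonneg hT.le]
      gcongr
      exact ht.2
    exact prod_mono (closedBall_subset_closedBall' (by linarith [hslow t ht, hδ.2]))
      (closedBall_subset_closedBall' (by linarith [dist_triangle (p.2 + t • v) p.2 y, hδ.2]))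
  have hγ : LipschitzWith r fun t : ℝ ↦ p.2 + t • v := .of_dist_le_mul fun s t ↦ by
    rw [dist_add_left, dist_eq_norm, ← sub_smul, norm_smul, ← dist_eq_norm, mul_comm]
    exact mul_le_mul_of_nonneg_right hv dist_nonneg
  obtain ⟨α, q, hq0, hq, hqt⟩ := htrack δ hδ.1 ε hε p _ T hγ (by simp) htube
  refine ⟨q T, ?_, α, q, hq T hT.le, fun t ht ↦ htube t ht (hqt t ht), hq0, rfl⟩
  have hpz : dist (p.2 + T • v) z = dist p.2 y := by
    rw [hTv, dist_eq_norm, dist_eq_norm, add_sub_assoc, sub_sub_cancel_left, ← sub_eq_add_neg]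
  have hTI : T ∈ Icc 0 T := ⟨hT.le, le_rfl⟩
  exact prod_mono (closedBall_subset_closedBall' (by linarith [hslow T hTI]))
    (closedBall_subset_closedBall' (by linarith)) (hqt T hTI)

lemma exists_steering_forward (h : IsSlowFastSystem A f g L Q) (x : X) (y z : Y) :
    ∃ T > 0, ∃ K, IsCompact K ∧ ∀ V ∈ 𝓝 (x, z), ∀ᶠ w : ℝ × (X × Y) in 𝓝[>] 0 ×ˢ 𝓝 (x, y),
      ∃ p ∈ V, SteersWithin (slowFast f g w.1) A K T w.2 p := by
  obtain ⟨T, hT, K, hK, hsteer⟩ := h.exists_approx_steering x y z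
  refine ⟨T, hT, K, hK, fun V hV ↦ ?_⟩
  obtain ⟨η, hη, hηV⟩ := nhds_basis_closedBall.mem_iff.1 hV
  obtain ⟨δ, hδ, hδη⟩ : ∃ δ ∈ Ioc (0 : ℝ) 1, 2 * δ ≤ η :=
    ⟨min 1 (η / 2), ⟨by positivity, min_le_left _ _⟩, by linarith [min_le_right 1 (η / 2)]⟩
  filter_upwards [prod_mem_prod (inter_mem (Ioc_mem_nhdsGT zero_lt_one)
    (eventually_mul_le (Q * T) hδ.1)) (closedBall_mem_nhds (x, y) hδ.1)] with ⟨ε, p⟩ ⟨⟨hε, hεT⟩, hp⟩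
  rw [← closedBall_prod_same] at hp
  obtain ⟨p', hp', hpp'⟩ := hsteer δ hδ ε hε hεT p hp
  rw [closedBall_prod_same] at hp'
  exact ⟨p', hηV (closedBall_subset_closedBall hδη hp'), hpp'⟩

lemma exists_steering_backward (h : IsSlowFastSystem A f g L Q) (x : X) (y z : Y) :
    ∃ T > 0, ∃ K, IsCompact K ∧ ∀ V ∈ 𝓝 (x, z), ∀ᶠ w : ℝ × (X × Y) in 𝓝[>] 0 ×ˢ 𝓝 (x, y),
      ∃ p ∈ V, SteersWithin (slowFast f g w.1) A K T p w.2 := by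
  obtain ⟨T, hT, K, hK, hsteer⟩ := h.neg.exists_steering_forward x y z
  refine ⟨T, hT, K, hK, fun V hV ↦ (hsteer V hV).mono fun w ⟨p, hpV, hp⟩ ↦ ⟨p, hpV, ?_⟩⟩
  have hrev := hp.reverse hT.le
  rwa [slowFast_neg, neg_neg] at hrev

end IsSlowFastSystem
end Steering

section ConcatIntegral

variable {G : Type*} {u v : ℝ → G} {S T : ℝ}

lemma concatAt_ae_eq_left : concatAt T u v =ᵐ[volume.restrict (Ioc 0 T)] u := by
  have hne : ∀ᵐ s ∂volume.restrict (Ioc 0 T), s ≠ T := ae_restrict_of_ae (Measure.ae_ne _ T)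
  filter_upwards [hne, ae_restrict_mem measurableSet_Ioc] with s hsT hs
  exact concatAt_of_lt (hs.2.lt_of_ne hsT)

lemma concatAt_eqOn_right : EqOn (concatAt T u v) (fun s ↦ v (s - T)) (Ici T) := fun s hs ↦ by
  simpa using concatAt_add (T := T) (u := u) (v := v) (sub_nonneg.2 hs)

variable [NormedAddCommGroup G]

lemma intervalIntegrable_concatAt (hT : 0 ≤ T) (hS : 0 ≤ S)
    (hu : IntervalIntegrable u volume 0 T) (hv : IntervalIntegrable v volume 0 S) :
    IntervalIntegrable (concatAt T u v) volume 0 T ∧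
      IntervalIntegrable (concatAt T u v) volume T (T + S) := by
  have hle : T ≤ T + S := by linarith
  constructor
  · refine hu.congr_ae ?_
    rw [uIoc_of_le hT]
    exact concatAt_ae_eq_left.symm
  · have hshift := hv.comp_sub_right T
    rw [zero_add, add_comm] at hshift
    refine hshift.congr fun s hs ↦ ?_
    rw [uIoc_of_le hle] at hs
    exact (concatAt_eqOn_right hs.1.le).symm

lemma integral_concatAt [NormedSpace ℝ G] (hT : 0 ≤ T) (hS : 0 ≤ S)
    (hu : IntervalIntegrable u volume 0 T) (hv : IntervalIntegrable v volume 0 S) :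
    ∫ s in 0..(T + S), concatAt T u v s = (∫ s in 0..T, u s) + ∫ s in 0..S, v s := by
  have hle : T ≤ T + S := by linarith
  have hleft : ∫ s in 0..T, concatAt T u v s = ∫ s in 0..T, u s := by
    refine intervalIntegral.integral_congr_ae_restrict ?_
    rw [uIoc_of_le hT]
    exact concatAt_ae_eq_left
  have hright : ∫ s in T..(T + S), concatAt T u v s = ∫ s in 0..S, v s := by
    rw [intervalIntegral.integral_congr (g := fun s ↦ v (s - T)) fun s hs ↦
      concatAt_eqOn_right (by rw [uIcc_of_le hle] at hs; exact hs.1)]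
    simp
  obtain ⟨hintT, hintS⟩ := intervalIntegrable_concatAt hT hS hu hv
  rw [← intervalIntegral.integral_add_adjacent_intervals hintT hintS, hleft, hright]

end ConcatIntegral

section OptimalCost

variable {E U : Type*} [NormedAddCommGroup E] [NormedSpace ℝ E] [MeasurableSpace U]
  {F : E → U → E} {A : Set U} {φ : E → U → ℝ} {ψ : E → ℝ} {S T : ℝ} {α : ℝ → U} {q : ℝ → E}

/-- The costs `∫ φ(p, α) + ψ(p(T))`, with the integral over `[0, T]`, of the controlled
trajectories of `F` issued from `x`. As in `valueFun` trajectories live on `[0, ∞)`, and those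
along which the running cost is not integrable are discarded. -/
def costSet (F : E → U → E) (A : Set U) (φ : E → U → ℝ) (ψ : E → ℝ) (T : ℝ) (x : E) : Set ℝ :=
  {v | ∃ (α : ℝ → U) (p : ℝ → E), (∀ S, 0 ≤ S → TrajOn F A S α p) ∧ p 0 = x ∧
    IntervalIntegrable (fun s ↦ φ (p s) (α s)) volume 0 T ∧
    v = (∫ s in 0..T, φ (p s) (α s)) + ψ (p T)}

/-- The value function of the Bolza problem with dynamics `F`, running cost `φ`, terminal cost
`ψ` and horizon `T`. It takes the junk value `0` where the costs are unbounded below. -/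
def optimalCost (F : E → U → E) (A : Set U) (φ : E → U → ℝ) (ψ : E → ℝ) (T : ℝ) (x : E) : ℝ :=
  sInf (costSet F A φ ψ T x)

/-- One half of the dynamic programming principle. -/
lemma optimalCost_add_le (hT : 0 ≤ T) (hS : 0 ≤ S) (hq : TrajOn F A T α q)
    (hφ : IntervalIntegrable (fun s ↦ φ (q s) (α s)) volume 0 T)
    (hne : (costSet F A φ ψ S (q T)).Nonempty) (hbdd : BddBelow (costSet F A φ ψ (T + S) (q 0))) :
    optimalCost F A φ ψ (T + S) (q 0) ≤
      (∫ s in 0..T, φ (q s) (α s)) + optimalCost F A φ ψ S (q T) := by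
  rw [← sub_le_iff_le_add']
  refine le_csInf hne ?_
  rintro _ ⟨β, p, hp, hpq, hφp, rfl⟩
  rw [sub_le_iff_le_add', ← add_assoc]
  have hcat : (fun s ↦ φ (concatAt T q p s) (concatAt T α β s)) =
      concatAt T (fun s ↦ φ (q s) (α s)) fun s ↦ φ (p s) (β s) := by
    funext s
    simp only [concatAt]
    split_ifs <;> rfl
  refine csInf_le hbdd
    ⟨concatAt T α β, concatAt T q p, fun R hR ↦ ?_, concatAt_of_le hpq hT, ?_, ?_⟩
  · exact (hq.concat hT (hp R hR) hR hpq).mono hR (by linarith)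
  · rw [hcat]
    exact (intervalIntegrable_concatAt hT hS hφ hφp).1.trans
      (intervalIntegrable_concatAt hT hS hφ hφp).2
  · rw [hcat, integral_concatAt hT hS hφ hφp, concatAt_add hS]

lemma TrajOn.intervalIntegrable_comp [TopologicalSpace U] [TopologicalSpace.PseudoMetrizableSpace U]
    [SecondCountableTopology U] [OpensMeasurableSpace U] {G : Type*} [NormedAddCommGroup G]
    {ℓ : E × U → G} (hq : TrajOn F A T α q) (hT : 0 ≤ T) (hA : IsCompact A) (hℓ : Continuous ℓ) :
    IntervalIntegrable (fun s ↦ ℓ (q s, α s)) volume 0 T := by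
  have hqc := hq.continuousOn hT
  obtain ⟨C, hC⟩ := ((isCompact_Icc.image_of_continuousOn hqc).prod hA).exists_bound_of_continuousOn
    hℓ.continuousOn
  rw [intervalIntegrable_iff_integrableOn_Icc_of_le hT]
  refine Integrable.of_bound (C := C) (hℓ.comp_aestronglyMeasurable
    ((hqc.aestronglyMeasurable measurableSet_Icc).prodMk
      hq.measurable.aestronglyMeasurable)) ?_
  filter_upwards [ae_restrict_mem measurableSet_Icc] with s hs
  exact hC _ ⟨mem_image_of_mem q hs, hq.mem s⟩

end OptimalCost

section SlowFastValue

variable {X Y U : Type*}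

/-- The continuity and lower bounds which (H4) and (H5) provide for the running cost `ℓ` and the
terminal cost `u₀`. -/
structure IsCost [TopologicalSpace X] [TopologicalSpace Y] [TopologicalSpace U] (A : Set U)
    (ℓ : X → Y → U → ℝ) (u₀ : X → Y → ℝ) : Prop where
  continuous_running : Continuous fun w : (X × Y) × U ↦ ℓ w.1.1 w.1.2 w.2
  continuous_terminal : Continuous fun z : X × Y ↦ u₀ z.1 z.2
  exists_running_ge : ∀ B : Set X, IsCompact B → ∃ c, ∀ x ∈ B, ∀ y, ∀ a ∈ A, c ≤ ℓ x y a
  exists_terminal_ge : ∀ B : Set X, IsCompact B → ∃ c, ∀ x ∈ B, ∀ y, c ≤ u₀ x y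

variable {A : Set U} {f : X → Y → U → X} {g : X → Y → U → Y} {ℓ : X → Y → U → ℝ}
  {u₀ : X → Y → ℝ}

lemma IsCost.exists_running_le [TopologicalSpace X] [TopologicalSpace Y] [TopologicalSpace U]
    (hc : IsCost A ℓ u₀) (hA : IsCompact A) {K : Set (X × Y)} (hK : IsCompact K) :
    ∃ C, 0 ≤ C ∧ ∀ z ∈ K, ∀ a ∈ A, ℓ z.1 z.2 a ≤ C := by
  obtain ⟨C, hC⟩ := (hK.prod hA).exists_bound_of_continuousOn hc.continuous_running.continuousOn
  exact ⟨max C 0, le_max_right _ _, fun z hz a ha ↦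
    (le_abs_self _).trans ((hC (z, a) ⟨hz, ha⟩).trans (le_max_left _ _))⟩

variable [NormedAddCommGroup X] [NormedSpace ℝ X] [NormedAddCommGroup Y] [MeasurableSpace U]

section Definitions

variable [NormedSpace ℝ Y] (A : Set U) (f : X → Y → U → X) (g : X → Y → U → Y)
  (ℓ : X → Y → U → ℝ) (u₀ : X → Y → ℝ) (ε : ℝ) (z : X × Y) (t : ℝ)

/-- The set of costs whose infimum is `V^ε(z, t)`; the factor `ε` in front of the integral is
absorbed into the running cost. -/
def slowFastCosts : Set ℝ :=
  costSet (slowFast f g ε) A (fun z a ↦ ε * ℓ z.1 z.2 a) (fun z ↦ u₀ z.1 z.2) (t / ε) z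

/-- The value function `V^ε(z, t)` of the slow-fast control problem, with the slow and the fast
variable paired; see `valueFun_eq_slowFastValue`. -/
def slowFastValue : ℝ :=
  optimalCost (slowFast f g ε) A (fun z a ↦ ε * ℓ z.1 z.2 a) (fun z ↦ u₀ z.1 z.2) (t / ε) z

end Definitions

section Measurable

variable [NormedSpace ℝ Y] [TopologicalSpace U] [TopologicalSpace.PseudoMetrizableSpace U]
  [SecondCountableTopology U] [OpensMeasurableSpace U]

namespace IsCost

lemma intervalIntegrable_running (hc : IsCost A ℓ u₀) (hA : IsCompact A) {ε T : ℝ} {α : ℝ → U}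
    {q : ℝ → X × Y} (hT : 0 ≤ T) (hq : TrajOn (slowFast f g ε) A T α q) :
    IntervalIntegrable (fun s ↦ ε * ℓ (q s).1 (q s).2 (α s)) volume 0 T :=
  (hq.intervalIntegrable_comp hT hA hc.continuous_running).const_mul ε

lemma integral_running_le (hc : IsCost A ℓ u₀) (hA : IsCompact A) {ε T C : ℝ} {α : ℝ → U}
    {q : ℝ → X × Y} (hε : 0 ≤ ε) (hT : 0 ≤ T) (hq : TrajOn (slowFast f g ε) A T α q)
    (hC : ∀ s ∈ Icc 0 T, ∀ a ∈ A, ℓ (q s).1 (q s).2 a ≤ C) :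
    ∫ s in 0..T, ε * ℓ (q s).1 (q s).2 (α s) ≤ ε * T * C := by
  have hle := intervalIntegral.integral_mono_on hT (hc.intervalIntegrable_running hA hT hq)
    intervalIntegrable_const fun s hs ↦ mul_le_mul_of_nonneg_left (hC s hs _ (hq.mem s)) hε
  rwa [intervalIntegral.integral_const, sub_zero, smul_eq_mul, ← mul_assoc, mul_comm T] at hle

end IsCost

end Measurable

variable [ProperSpace X] [InnerProductSpace ℝ Y] [ProperSpace Y] [TopologicalSpace U]
  {L : ℝ≥0} {Q : ℝ}

namespace IsSlowFastSystem

lemma exists_mem_lowerBounds_slowFastCosts (h : IsSlowFastSystem A f g L Q) (hc : IsCost A ℓ u₀)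
    (x : X) (R : ℝ) : ∃ m, ∀ ε > 0, ∀ t ∈ Icc 0 R, ∀ z : X × Y, z.1 ∈ closedBall x 1 →
      m ∈ lowerBounds (slowFastCosts A f g ℓ u₀ ε z t) := by
  obtain ⟨c, hℓ⟩ := hc.exists_running_ge _ (isCompact_closedBall x (1 + Q * R))
  obtain ⟨d, hu₀⟩ := hc.exists_terminal_ge _ (isCompact_closedBall x (1 + Q * R))
  refine ⟨R * min c 0 + d, fun ε hε t ht z hz ↦ ?_⟩
  rintro _ ⟨α, q, hq, rfl, hint, rfl⟩
  have hT : 0 ≤ t / ε := div_nonneg ht.1 hε.le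
  have hslow : ∀ s ∈ Icc 0 (t / ε), (q s).1 ∈ closedBall x (1 + Q * R) := by
    intro s hs
    have hεs : ε * s ≤ R := ((le_div_iff₀' hε).1 hs.2).trans ht.2
    have hQ : ε * Q * s ≤ Q * R := by nlinarith [mul_le_mul_of_nonneg_left hεs h.bound_nonneg]
    exact closedBall_subset_closedBall' (by linarith [mem_closedBall.1 hz])
      (h.slow_mem_closedBall hε.le (hq _ hT) hs)
  have hrun : R * min c 0 ≤ ∫ s in 0..(t / ε), ε * ℓ (q s).1 (q s).2 (α s) :=
    calc R * min c 0 ≤ t * min c 0 := mul_le_mul_of_nonpos_right ht.2 (min_le_right _ _)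
      _ = ∫ _ in 0..(t / ε), ε * min c 0 := by
        rw [intervalIntegral.integral_const, sub_zero, smul_eq_mul, ← mul_assoc,
          div_mul_cancel₀ _ hε.ne']
      _ ≤ _ := intervalIntegral.integral_mono_on hT intervalIntegrable_const hint fun s hs ↦
        mul_le_mul_of_nonneg_left
          ((min_le_left _ _).trans (hℓ _ (hslow s hs) _ _ ((hq _ hT).mem s))) hε.le
  exact add_le_add hrun (hu₀ _ (hslow _ ⟨hT, le_rfl⟩) _)

variable [TopologicalSpace.PseudoMetrizableSpace U] [SecondCountableTopology U]
  [OpensMeasurableSpace U]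

lemma exists_mem_slowFastCosts_le (h : IsSlowFastSystem A f g L Q) (hA : IsCompact A)
    (hc : IsCost A ℓ u₀) (x : X) (y : Y) (R : ℝ) :
    ∃ m, ∀ ε ∈ Ioc (0 : ℝ) 1, ∀ t ∈ Icc 0 R, ∀ z ∈ closedBall x 1 ×ˢ closedBall y 1,
      ∃ v ∈ slowFastCosts A f g ℓ u₀ ε z t, v ≤ m := by
  obtain ⟨K, hK, hconf⟩ := h.exists_confined x y R
  obtain ⟨C, hC0, hC⟩ := hc.exists_running_le hA hK
  obtain ⟨D, hD⟩ := hK.exists_bound_of_continuousOn hc.continuous_terminal.continuousOn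
  refine ⟨R * C + D, fun ε hε t ht z hz ↦ ?_⟩
  obtain ⟨α, q, rfl, hq, hqK⟩ := hconf ε hε z hz
  have hT : 0 ≤ t / ε := div_nonneg ht.1 hε.1.le
  have hεT : ε * (t / ε) = t := mul_div_cancel₀ _ hε.1.ne'
  have hqK' : ∀ s ∈ Icc 0 (t / ε), q s ∈ K := fun s hs ↦
    hqK s hs.1 (((le_div_iff₀' hε.1).1 hs.2).trans ht.2)
  refine ⟨_, ⟨α, q, hq, rfl, hc.intervalIntegrable_running hA hT (hq _ hT), rfl⟩, add_le_add ?_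
    ((le_abs_self _).trans (hD _ (hqK' _ ⟨hT, le_rfl⟩)))⟩
  refine (hc.integral_running_le hA hε.1.le hT (hq _ hT) fun s hs ↦ hC _ (hqK' s hs)).trans ?_
  rw [hεT]
  exact mul_le_mul_of_nonneg_right ht.2 hC0

lemma exists_abs_slowFastValue_le (h : IsSlowFastSystem A f g L Q) (hA : IsCompact A)
    (hc : IsCost A ℓ u₀) (x : X) (y : Y) (R : ℝ) :
    ∃ m, ∀ ε ∈ Ioc (0 : ℝ) 1, ∀ t ∈ Icc 0 R, ∀ z ∈ closedBall x 1 ×ˢ closedBall y 1,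
      |slowFastValue A f g ℓ u₀ ε z t| ≤ m := by
  obtain ⟨m, hm⟩ := h.exists_mem_lowerBounds_slowFastCosts hc x R
  obtain ⟨m', hm'⟩ := h.exists_mem_slowFastCosts_le hA hc x y R
  refine ⟨max (-m) m', fun ε hε t ht z hz ↦ ?_⟩
  obtain ⟨v, hv, hvm'⟩ := hm' ε hε t ht z hz
  have hlow := hm ε hε.1 t ht z hz.1
  refine abs_le'.2 ⟨?_, ?_⟩
  · exact (csInf_le ⟨m, hlow⟩ hv).trans (hvm'.trans (le_max_right _ _))
  · exact (neg_le_neg (le_csInf ⟨v, hv⟩ hlow)).trans (le_max_left _ _)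

lemma slowFastValue_le_add_of_steersWithin (h : IsSlowFastSystem A f g L Q) (hA : IsCompact A)
    (hc : IsCost A ℓ u₀) {K : Set (X × Y)} {C : ℝ} (hC : ∀ z ∈ K, ∀ a ∈ A, ℓ z.1 z.2 a ≤ C)
    {ε T t : ℝ} (hε : ε ∈ Ioc 0 1) (hT : 0 ≤ T) (ht : 0 ≤ t) {z z' : X × Y}
    (hz : SteersWithin (slowFast f g ε) A K T z z') :
    slowFastValue A f g ℓ u₀ ε z (t + ε * T) ≤ slowFastValue A f g ℓ u₀ ε z' t + ε * T * C := by
  obtain ⟨α, q, hq, hqK, rfl, rfl⟩ := hz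
  obtain ⟨m, hm⟩ := h.exists_mem_lowerBounds_slowFastCosts hc (q 0).1 (t + ε * T)
  obtain ⟨m', hm'⟩ := h.exists_mem_slowFastCosts_le hA hc (q T).1 (q T).2 t
  obtain ⟨v, hv, -⟩ := hm' ε hε t ⟨ht, le_rfl⟩ (q T) ⟨by simp, by simp⟩
  have hlow := hm ε hε.1 (t + ε * T) ⟨add_nonneg ht (mul_nonneg hε.1.le hT), le_rfl⟩ (q 0) (by simp)
  have hhor : (t + ε * T) / ε = T + t / ε := by
    rw [add_div, mul_div_cancel_left₀ _ hε.1.ne', add_comm]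
  unfold slowFastCosts at hlow
  rw [hhor] at hlow
  unfold slowFastValue
  rw [hhor]
  calc _ ≤ _ := optimalCost_add_le hT (div_nonneg ht hε.1.le) hq
        (hc.intervalIntegrable_running hA hT hq) ⟨v, hv⟩ ⟨m, hlow⟩
    _ ≤ ε * T * C + _ := by
      gcongr
      exact hc.integral_running_le hA hε.1.le hT hq fun s hs ↦ hC _ (hqK s hs)
    _ = _ := add_comm _ _

end IsSlowFastSystem
end SlowFastValue

section Semilimits

lemma real_limsup_neg {ι : Type*} {F : Filter ι} (u : ι → ℝ) :
    limsup (fun i ↦ -u i) F = -liminf u F := by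
  rw [limsup_eq, liminf_eq, Real.sInf_def]
  congr 2
  ext a
  simp

lemma limsup_le_limsup_of_forall_eventually_exists {ι ι' : Type*} {F : Filter ι} {F' : Filter ι'}
    [NeBot F] {u : ι → ℝ} {u' : ι' → ℝ} (hu : IsBoundedUnder (· ≥ ·) F u)
    (hu' : IsBoundedUnder (· ≤ ·) F' u')
    (h : ∀ s ∈ F', ∀ δ > 0, ∀ᶠ i in F, ∃ j ∈ s, u i ≤ u' j + δ) : limsup u F ≤ limsup u' F' := by
  refine le_of_forall_gt_imp_ge_of_dense fun c hc ↦ le_of_forall_pos_le_add fun δ hδ ↦ ?_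
  refine limsup_le_of_le hu.isCoboundedUnder_le ?_
  filter_upwards [h _ (eventually_lt_of_limsup_lt hc hu') δ hδ] with i ⟨j, hj, hij⟩
  exact hij.trans (by simpa using le_of_lt hj)

variable {Z : Type*} [TopologicalSpace Z] {V V' : ℝ → Z → ℝ} {z z' : Z}

lemma lowerLim_eq_neg_upperLim (V : ℝ → Z → ℝ) (z : Z) : lowerLim V z = -upperLim (-V) z := by
  rw [lowerLim, upperLim, Real.sInf_def]
  congr 2
  ext l
  simp only [Set.mem_neg, mem_ofPred_eq, Pi.neg_apply, real_limsup_neg, neg_eq_iff_eq_neg]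

lemma upperLim_congr (h : ∀ ε > 0, V ε = V' ε) : upperLim V z = upperLim V' z := by
  unfold upperLim
  congr 1
  ext l
  refine exists_congr fun e ↦ exists_congr fun w ↦ and_congr_right fun he ↦ ?_
  simp only [h _ (he _)]

lemma lowerLim_congr (h : ∀ ε > 0, V ε = V' ε) : lowerLim V z = lowerLim V' z := by
  rw [lowerLim_eq_neg_upperLim, lowerLim_eq_neg_upperLim,
    upperLim_congr (V := -V) (V' := -V') fun ε hε ↦ congrArg Neg.neg (h ε hε)]

variable [FirstCountableTopology Z]

lemma upperLim_eq_limsup (hV : IsBoundedUnder (· ≤ ·) (𝓝[>] 0 ×ˢ 𝓝 z) fun w ↦ |V w.1 w.2|) :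
    upperLim V z = limsup (fun w ↦ V w.1 w.2) (𝓝[>] 0 ×ˢ 𝓝 z) := by
  obtain ⟨hle, hge⟩ := isBoundedUnder_le_abs.1 hV
  have hseq : ∀ c < limsup (fun w ↦ V w.1 w.2) (𝓝[>] 0 ×ˢ 𝓝 z), ∃ l,
      (∃ (e : ℕ → ℝ) (w : ℕ → Z), (∀ n, 0 < e n) ∧
        Tendsto e atTop (𝓝 0) ∧ Tendsto w atTop (𝓝 z) ∧
        l = limsup (fun n ↦ V (e n) (w n)) atTop) ∧ c < l := by
    intro c hc
    obtain ⟨d, hcd, hd⟩ := exists_between hc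
    have hpos : ∀ᶠ w : ℝ × Z in 𝓝[>] 0 ×ˢ 𝓝 z, 0 < w.1 :=
      tendsto_fst.eventually self_mem_nhdsWithin
    obtain ⟨s, hs, hsd⟩ := exists_seq_forall_of_frequently
      ((frequently_lt_of_lt_limsup hge.isCoboundedUnder_le hd).and_eventually hpos)
    refine ⟨_, ⟨fun n ↦ (s n).1, fun n ↦ (s n).2, fun n ↦ (hsd n).2,
      (tendsto_fst.comp hs).mono_right nhdsWithin_le_nhds, tendsto_snd.comp hs, rfl⟩, ?_⟩
    exact hcd.trans_le (le_limsup_of_frequently_le (.of_forall fun n ↦ (hsd n).1.le)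
      (IsBoundedUnder.mono hs hle :))
  refine csSup_eq_of_forall_le_of_forall_lt_exists_gt ?_ ?_ hseq
  · exact (exists_lt _).elim fun c hc ↦ (hseq c hc).imp fun l hl ↦ hl.1
  · rintro _ ⟨e, w, he, he0, hw, rfl⟩
    have hs : Tendsto (fun n ↦ (e n, w n)) atTop (𝓝[>] 0 ×ˢ 𝓝 z) :=
      (tendsto_nhdsWithin_iff.2 ⟨he0, .of_forall he⟩).prodMk hw
    exact limsup_le_limsup_of_le (u := fun w ↦ V w.1 w.2) hs
      (IsBoundedUnder.mono hs hge :).isCoboundedUnder_le hle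

lemma upperLim_le_of_forall_eventually_exists
    (hz : IsBoundedUnder (· ≤ ·) (𝓝[>] 0 ×ˢ 𝓝 z) fun w ↦ |V w.1 w.2|)
    (hz' : IsBoundedUnder (· ≤ ·) (𝓝[>] 0 ×ˢ 𝓝 z') fun w ↦ |V w.1 w.2|)
    (h : ∀ W ∈ 𝓝 z', ∀ δ > 0, ∀ᶠ w : ℝ × Z in 𝓝[>] 0 ×ˢ 𝓝 z,
      ∃ w' ∈ W, V w.1 w.2 ≤ V w.1 w' + δ) : upperLim V z ≤ upperLim V z' := by
  rw [upperLim_eq_limsup hz, upperLim_eq_limsup hz']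
  refine limsup_le_limsup_of_forall_eventually_exists (isBoundedUnder_le_abs.1 hz).2
    (isBoundedUnder_le_abs.1 hz').1 fun s hs δ hδ ↦ ?_
  obtain ⟨N, hN, W, hW, hNW⟩ := mem_prod_iff.1 hs
  filter_upwards [h W hW δ hδ, tendsto_fst.eventually hN] with w ⟨w', hw', hle⟩ hwN
  exact ⟨(w.1, w'), hNW ⟨hwN, hw'⟩, hle⟩

lemma lowerLim_le_of_forall_eventually_exists
    (hz : IsBoundedUnder (· ≤ ·) (𝓝[>] 0 ×ˢ 𝓝 z) fun w ↦ |V w.1 w.2|)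
    (hz' : IsBoundedUnder (· ≤ ·) (𝓝[>] 0 ×ˢ 𝓝 z') fun w ↦ |V w.1 w.2|)
    (h : ∀ W ∈ 𝓝 z, ∀ δ > 0, ∀ᶠ w : ℝ × Z in 𝓝[>] 0 ×ˢ 𝓝 z',
      ∃ w' ∈ W, V w.1 w' ≤ V w.1 w.2 + δ) : lowerLim V z ≤ lowerLim V z' := by
  rw [lowerLim_eq_neg_upperLim, lowerLim_eq_neg_upperLim, neg_le_neg_iff]
  refine upperLim_le_of_forall_eventually_exists (by simpa using hz') (by simpa using hz)
    fun W hW δ hδ ↦ (h W hW δ hδ).mono fun w hw ↦ hw.imp fun w' hw' ↦ ⟨hw'.1, ?_⟩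
  simp only [Pi.neg_apply]
  linarith [hw'.2]

end Semilimits

section Comparison

lemma eventually_exists_shifted_mem {X Y : Type*} [TopologicalSpace X] [TopologicalSpace Y]
    {P : ℝ → X × Y → X × Y → Prop} {x x' : X} {y y' : Y} {t c : ℝ}
    (hP : ∀ V ∈ 𝓝 (x', y'), ∀ᶠ w : ℝ × (X × Y) in 𝓝[>] 0 ×ˢ 𝓝 (x, y), ∃ p ∈ V, P w.1 w.2 p)
    {W : Set (X × Y × ℝ)} (hW : W ∈ 𝓝 (x', y', t)) :
    ∀ᶠ w : ℝ × (X × Y × ℝ) in 𝓝[>] 0 ×ˢ 𝓝 (x, y, t),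
      ∃ p : X × Y, (p.1, p.2, w.2.2.2 + c * w.1) ∈ W ∧ P w.1 (w.2.1, w.2.2.1) p := by
  have hassoc : Tendsto (fun q : (X × Y) × ℝ ↦ (q.1.1, q.1.2, q.2)) (𝓝 ((x', y'), t))
      (𝓝 (x', y', t)) := Continuous.tendsto' (by fun_prop) _ _ rfl
  obtain ⟨V, hV, S, hS, hVS⟩ := mem_nhds_prod_iff.1 (hassoc hW)
  have hstate : Tendsto (fun w : ℝ × (X × Y × ℝ) ↦ (w.1, (w.2.1, w.2.2.1)))
      (𝓝[>] 0 ×ˢ 𝓝 (x, y, t)) (𝓝[>] 0 ×ˢ 𝓝 (x, y)) :=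
    tendsto_fst.prodMk ((Continuous.tendsto' (f := fun z : X × Y × ℝ ↦ (z.1, z.2.1))
      (by fun_prop) _ _ rfl).comp tendsto_snd)
  have htime : Tendsto (fun w : ℝ × (X × Y × ℝ) ↦ w.2.2.2 + c * w.1)
      (𝓝[>] 0 ×ˢ 𝓝 (x, y, t)) (𝓝 t) := by
    refine Tendsto.mono_left ?_ (prod_mono nhdsWithin_le_nhds le_rfl)
    rw [← nhds_prod_eq]
    exact Continuous.tendsto' (by fun_prop) _ _ (by simp)
  filter_upwards [hstate.eventually (hP V hV), htime.eventually hS] with w ⟨p, hpV, hp⟩ hwS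
  exact ⟨p, hVS (mk_mem_prod hpV hwS), hp⟩

variable {X Y U : Type*} [NormedAddCommGroup X] [NormedSpace ℝ X] [ProperSpace X]
  [NormedAddCommGroup Y] [InnerProductSpace ℝ Y] [ProperSpace Y]
  [MeasurableSpace U] [TopologicalSpace U] [TopologicalSpace.PseudoMetrizableSpace U]
  [SecondCountableTopology U] [OpensMeasurableSpace U]
  {A : Set U} {f : X → Y → U → X} {g : X → Y → U → Y} {ℓ : X → Y → U → ℝ} {u₀ : X → Y → ℝ}
  {L : ℝ≥0} {Q t : ℝ}

namespace IsSlowFastSystem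

lemma isBoundedUnder_abs_slowFastValue (h : IsSlowFastSystem A f g L Q) (hA : IsCompact A)
    (hc : IsCost A ℓ u₀) (x : X) (y : Y) (ht : 0 < t) :
    IsBoundedUnder (· ≤ ·) (𝓝[>] 0 ×ˢ 𝓝 (x, y, t)) fun w : ℝ × (X × Y × ℝ) ↦
      |slowFastValue A f g ℓ u₀ w.1 (w.2.1, w.2.2.1) w.2.2.2| := by
  obtain ⟨m, hm⟩ := h.exists_abs_slowFastValue_le hA hc x y (t + 1)
  refine isBoundedUnder_of_eventually_le (a := m) ?_
  filter_upwards [prod_mem_prod (Ioc_mem_nhdsGT one_pos)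
    (prod_mem_nhds (closedBall_mem_nhds x one_pos)
      (prod_mem_nhds (closedBall_mem_nhds y one_pos) (Icc_mem_nhds ht (lt_add_one t))))]
    with w ⟨hε, hx, hy, hs⟩
  exact hm _ hε _ hs _ ⟨hx, hy⟩

lemma eventually_exists_slowFastValue_ge (h : IsSlowFastSystem A f g L Q) (hA : IsCompact A)
    (hc : IsCost A ℓ u₀) (x : X) (y y' : Y) (ht : 0 < t) {W : Set (X × Y × ℝ)}
    (hW : W ∈ 𝓝 (x, y', t)) {δ : ℝ} (hδ : 0 < δ) :
    ∀ᶠ w : ℝ × (X × Y × ℝ) in 𝓝[>] 0 ×ˢ 𝓝 (x, y, t), ∃ w' ∈ W,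
      slowFastValue A f g ℓ u₀ w.1 (w.2.1, w.2.2.1) w.2.2.2 ≤
        slowFastValue A f g ℓ u₀ w.1 (w'.1, w'.2.1) w'.2.2 + δ := by
  obtain ⟨T, hT, K, hK, hsteer⟩ := h.exists_steering_forward x y y'
  obtain ⟨C, -, hC⟩ := hc.exists_running_le hA hK
  have hpos : {w' : X × Y × ℝ | 0 < w'.2.2} ∈ 𝓝 (x, y', t) :=
    (isOpen_lt (by fun_prop) (by fun_prop)).mem_nhds ht
  filter_upwards [eventually_exists_shifted_mem
      (P := fun ε ↦ SteersWithin (slowFast f g ε) A K T) (c := -T) hsteer (inter_mem hW hpos),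
    tendsto_fst.eventually (Ioc_mem_nhdsGT one_pos),
    tendsto_fst.eventually (eventually_mul_le (T * C) hδ)] with w ⟨p, ⟨hpW, hps⟩, hp⟩ hε hδε
  refine ⟨_, hpW, ?_⟩
  have hle := h.slowFastValue_le_add_of_steersWithin hA hc hC hε hT.le (le_of_lt hps) hp
  rw [show w.2.2.2 + -T * w.1 + w.1 * T = w.2.2.2 by ring] at hle
  exact hle.trans (add_le_add_right (by linarith) _)

lemma eventually_exists_slowFastValue_le (h : IsSlowFastSystem A f g L Q) (hA : IsCompact A)
    (hc : IsCost A ℓ u₀) (x : X) (y y' : Y) (ht : 0 < t) {W : Set (X × Y × ℝ)}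
    (hW : W ∈ 𝓝 (x, y', t)) {δ : ℝ} (hδ : 0 < δ) :
    ∀ᶠ w : ℝ × (X × Y × ℝ) in 𝓝[>] 0 ×ˢ 𝓝 (x, y, t), ∃ w' ∈ W,
      slowFastValue A f g ℓ u₀ w.1 (w'.1, w'.2.1) w'.2.2 ≤
        slowFastValue A f g ℓ u₀ w.1 (w.2.1, w.2.2.1) w.2.2.2 + δ := by
  obtain ⟨T, hT, K, hK, hsteer⟩ := h.exists_steering_backward x y y'
  obtain ⟨C, -, hC⟩ := hc.exists_running_le hA hK
  have hpos : {w : X × Y × ℝ | 0 < w.2.2} ∈ 𝓝 (x, y, t) :=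
    (isOpen_lt (by fun_prop) (by fun_prop)).mem_nhds ht
  filter_upwards [eventually_exists_shifted_mem
      (P := fun ε z p ↦ SteersWithin (slowFast f g ε) A K T p z) (c := T) hsteer hW,
    tendsto_fst.eventually (Ioc_mem_nhdsGT one_pos), tendsto_snd.eventually hpos,
    tendsto_fst.eventually (eventually_mul_le (T * C) hδ)] with w ⟨p, hpW, hp⟩ hε hs hδε
  refine ⟨_, hpW, ?_⟩
  have hle := h.slowFastValue_le_add_of_steersWithin hA hc hC hε hT.le (le_of_lt hs) hp
  rw [mul_comm w.1 T] at hle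
  exact hle.trans (add_le_add_right (by linarith) _)

lemma upperLim_slowFastValue_le (h : IsSlowFastSystem A f g L Q) (hA : IsCompact A)
    (hc : IsCost A ℓ u₀) (x : X) (y y' : Y) (ht : 0 < t) :
    upperLim (fun ε (z : X × Y × ℝ) ↦ slowFastValue A f g ℓ u₀ ε (z.1, z.2.1) z.2.2) (x, y, t) ≤
      upperLim (fun ε (z : X × Y × ℝ) ↦ slowFastValue A f g ℓ u₀ ε (z.1, z.2.1) z.2.2)
        (x, y', t) :=
  upperLim_le_of_forall_eventually_exists (h.isBoundedUnder_abs_slowFastValue hA hc x y ht)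
    (h.isBoundedUnder_abs_slowFastValue hA hc x y' ht)
    fun _ hW _ hδ ↦ h.eventually_exists_slowFastValue_ge hA hc x y y' ht hW hδ

lemma lowerLim_slowFastValue_le (h : IsSlowFastSystem A f g L Q) (hA : IsCompact A)
    (hc : IsCost A ℓ u₀) (x : X) (y y' : Y) (ht : 0 < t) :
    lowerLim (fun ε (z : X × Y × ℝ) ↦ slowFastValue A f g ℓ u₀ ε (z.1, z.2.1) z.2.2) (x, y, t) ≤
      lowerLim (fun ε (z : X × Y × ℝ) ↦ slowFastValue A f g ℓ u₀ ε (z.1, z.2.1) z.2.2)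
        (x, y', t) :=
  lowerLim_le_of_forall_eventually_exists (h.isBoundedUnder_abs_slowFastValue hA hc x y ht)
    (h.isBoundedUnder_abs_slowFastValue hA hc x y' ht)
    fun _ hW _ hδ ↦ h.eventually_exists_slowFastValue_le hA hc x y' y ht hW hδ

end IsSlowFastSystem

end Comparison

section IntervalIntegral

variable {G H : Type*} [NormedAddCommGroup G] [NormedSpace ℝ G] [NormedAddCommGroup H]
  [NormedSpace ℝ H] {u : ℝ → G} {v : ℝ → H} {a b : ℝ}

lemma intervalIntegrable_prodMk_iff :
    IntervalIntegrable (fun s ↦ (u s, v s)) volume a b ↔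
      IntervalIntegrable u volume a b ∧ IntervalIntegrable v volume a b := by
  simp only [intervalIntegrable_iff]
  exact ⟨fun h ↦ ⟨h.fst, h.snd⟩, fun h ↦ h.1.prodMk h.2⟩

lemma intervalIntegrable_const_smul_iff {c : ℝ} (hc : c ≠ 0) :
    IntervalIntegrable (fun s ↦ c • u s) volume a b ↔ IntervalIntegrable u volume a b := by
  simp only [intervalIntegrable_iff]
  exact integrable_smul_iff hc u

lemma intervalIntegral_prodMk [CompleteSpace G] [CompleteSpace H]
    (hu : IntervalIntegrable u volume a b) (hv : IntervalIntegrable v volume a b) :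
    ∫ s in a..b, (u s, v s) = (∫ s in a..b, u s, ∫ s in a..b, v s) := by
  simp only [intervalIntegral, integral_pair hu.1 hv.1, integral_pair hu.2 hv.2, Prod.mk_sub_mk]

end IntervalIntegral

section ValueFun

variable {N M k : ℕ} {A : Set (Euc k)} {f : Euc N → Euc M → Euc k → Euc N}
  {g : Euc N → Euc M → Euc k → Euc M} {ℓ : Euc N → Euc M → Euc k → ℝ} {u₀ : Euc N → Euc M → ℝ}
  {ε : ℝ}

lemma isTrajectory_iff_trajOn_slowFast (hε : ε ≠ 0) {α : ℝ → Euc k} {q : ℝ → Euc N × Euc M} :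
    IsControl A α ∧ IsTrajectory f g ε α (fun s ↦ (q s).1) (fun s ↦ (q s).2) ↔
      ∀ T, 0 ≤ T → TrajOn (slowFast f g ε) A T α q := by
  have hint (t : ℝ) : IntervalIntegrable (fun s ↦ slowFast f g ε (q s) (α s)) volume 0 t ↔
      IntervalIntegrable (fun s ↦ f (q s).1 (q s).2 (α s)) volume 0 t ∧
        IntervalIntegrable (fun s ↦ g (q s).1 (q s).2 (α s)) volume 0 t := by
    simp only [slowFast, intervalIntegrable_prodMk_iff, intervalIntegrable_const_smul_iff hε]
  have heq (t : ℝ) (h : IntervalIntegrable (fun s ↦ slowFast f g ε (q s) (α s)) volume 0 t) :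
      q t = q 0 + ∫ s in 0..t, slowFast f g ε (q s) (α s) ↔
        (q t).1 = (q 0).1 + ε • ∫ s in 0..t, f (q s).1 (q s).2 (α s) ∧
          (q t).2 = (q 0).2 + ∫ s in 0..t, g (q s).1 (q s).2 (α s) := by
    obtain ⟨hf, hg⟩ := (hint t).1 h
    simp only [slowFast]
    rw [intervalIntegral_prodMk ((intervalIntegrable_const_smul_iff hε).2 hf) hg,
      intervalIntegral.integral_smul, Prod.ext_iff, Prod.fst_add, Prod.snd_add]
  constructor
  · rintro ⟨⟨hα, hαA⟩, hf, hg, hξ, hη⟩ T hT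
    exact ⟨hα, hαA, (hint T).2 ⟨hf T hT, hg T hT⟩, fun t ht ↦
      (heq t ((hint t).2 ⟨hf t ht.1, hg t ht.1⟩)).2 ⟨hξ t ht.1, hη t ht.1⟩⟩
  · intro h
    have hI (t : ℝ) (ht : 0 ≤ t) := (hint t).1 (h t ht).intervalIntegrable
    have hE (t : ℝ) (ht : 0 ≤ t) :=
      (heq t (h t ht).intervalIntegrable).1 ((h t ht).eq_add_integral t ⟨ht, le_rfl⟩)
    exact ⟨⟨(h 0 le_rfl).measurable, (h 0 le_rfl).mem⟩, fun t ht ↦ (hI t ht).1,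
      fun t ht ↦ (hI t ht).2, fun t ht ↦ (hE t ht).1, fun t ht ↦ (hE t ht).2⟩

lemma valueFun_eq_slowFastValue (hε : ε ≠ 0) (x : Euc N) (y : Euc M) (t : ℝ) :
    valueFun A f g ℓ u₀ ε x y t = slowFastValue A f g ℓ u₀ ε (x, y) t := by
  unfold valueFun slowFastValue optimalCost costSet
  congr 1
  ext v
  simp only [mem_ofPred_eq, ← smul_eq_mul ε, intervalIntegrable_const_smul_iff hε,
    intervalIntegral.integral_smul]
  constructor
  · rintro ⟨α, ξ, η, hα, htraj, rfl, rfl, hint, rfl⟩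
    exact ⟨α, fun s ↦ (ξ s, η s), (isTrajectory_iff_trajOn_slowFast hε).1 ⟨hα, htraj⟩, rfl,
      hint, rfl⟩
  · rintro ⟨α, q, hq, hq0, hint, rfl⟩
    obtain ⟨hα, htraj⟩ := (isTrajectory_iff_trajOn_slowFast hε).2 hq
    exact ⟨α, _, _, hα, htraj, congrArg Prod.fst hq0, congrArg Prod.snd hq0, hint, rfl⟩

lemma lowerLim_valueFun (w : Euc N × Euc M × ℝ) :
    lowerLim (fun ε (z : Euc N × Euc M × ℝ) ↦ valueFun A f g ℓ u₀ ε z.1 z.2.1 z.2.2) w =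
      lowerLim (fun ε z ↦ slowFastValue A f g ℓ u₀ ε (z.1, z.2.1) z.2.2) w :=
  lowerLim_congr fun _ hε ↦ funext fun _ ↦ valueFun_eq_slowFastValue hε.ne' _ _ _

lemma upperLim_valueFun (w : Euc N × Euc M × ℝ) :
    upperLim (fun ε (z : Euc N × Euc M × ℝ) ↦ valueFun A f g ℓ u₀ ε z.1 z.2.1 z.2.2) w =
      upperLim (fun ε z ↦ slowFastValue A f g ℓ u₀ ε (z.1, z.2.1) z.2.2) w :=
  upperLim_congr fun _ hε ↦ funext fun _ ↦ valueFun_eq_slowFastValue hε.ne' _ _ _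

end ValueFun

lemma lipschitzWith_two_mul_of_norm_sub_le {X Y G : Type*} [SeminormedAddCommGroup X]
    [SeminormedAddCommGroup Y] [SeminormedAddCommGroup G] {F : X → Y → G} {L : ℝ} (hL : 0 ≤ L)
    (hF : ∀ x₁ x₂ y₁ y₂, ‖F x₁ y₁ - F x₂ y₂‖ ≤ L * (‖x₁ - x₂‖ + ‖y₁ - y₂‖)) :
    LipschitzWith (2 * L).toNNReal fun z : X × Y ↦ F z.1 z.2 := by
  refine LipschitzWith.of_dist_le' fun z w ↦ ?_
  rw [dist_eq_norm, dist_eq_norm, mul_assoc, mul_left_comm, two_mul]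
  exact (hF _ _ _ _).trans <| mul_le_mul_of_nonneg_left
    (add_le_add (norm_fst_le (z - w)) (norm_snd_le (z - w))) hL

lemma exists_forall_le_of_forall_lt_norm {X Y U : Type*} [TopologicalSpace X]
    [SeminormedAddCommGroup Y] [ProperSpace Y] [TopologicalSpace U] {A : Set U} {B : Set X}
    {ℓ : X → Y → U → ℝ} (hA : IsCompact A) (hB : IsCompact B)
    (hℓ : Continuous fun w : (X × Y) × U ↦ ℓ w.1.1 w.1.2 w.2) {c R : ℝ}
    (hR : ∀ y, R < ‖y‖ → ∀ x ∈ B, ∀ a ∈ A, c < ℓ x y a) :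
    ∃ m, ∀ x ∈ B, ∀ y, ∀ a ∈ A, m ≤ ℓ x y a := by
  obtain ⟨m, hm⟩ := (((hB.prod (isCompact_closedBall (0 : Y) R)).prod hA).image hℓ).bddBelow
  refine ⟨min m c, fun x hx y a ha ↦ ?_⟩
  rcases le_or_gt ‖y‖ R with hy | hy
  · exact (min_le_left _ _).trans
      (hm ⟨((x, y), a), ⟨⟨hx, mem_closedBall_zero_iff.2 hy⟩, ha⟩, rfl⟩)
  · exact (min_le_right _ _).trans (hR y hy x hx a ha).le

lemma isSlowFastSystem_of_ball_subset_closure_convexHull {X Y U : Type*} [NormedAddCommGroup X]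
    [NormedAddCommGroup Y] [InnerProductSpace ℝ Y] {A : Set U} {f : X → Y → U → X}
    {g : X → Y → U → Y} {L Q : ℝ} (hL : 0 ≤ L)
    (hf : ∀ x₁ x₂ y₁ y₂, ∀ a ∈ A, ‖f x₁ y₁ a - f x₂ y₂ a‖ ≤ L * (‖x₁ - x₂‖ + ‖y₁ - y₂‖))
    (hg : ∀ x₁ x₂ y₁ y₂, ∀ a ∈ A, ‖g x₁ y₁ a - g x₂ y₂ a‖ ≤ L * (‖x₁ - x₂‖ + ‖y₁ - y₂‖))
    (hfQ : ∀ x y, ∀ a ∈ A, ‖f x y a‖ ≤ Q)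
    (hball : ∀ K : Set (X × Y), IsCompact K → ∃ r > 0, ∀ z ∈ K,
      ball (0 : Y) r ⊆ closure (convexHull ℝ ((fun a ↦ g z.1 z.2 a) '' A))) :
    IsSlowFastSystem A f g (2 * L).toNNReal Q where
  lipschitz_slow a ha := lipschitzWith_two_mul_of_norm_sub_le hL (hf · · · · a ha)
  lipschitz_fast a ha := lipschitzWith_two_mul_of_norm_sub_le hL (hg · · · · a ha)
  norm_slow_le := hfQ
  exists_push K hK := by
    obtain ⟨r, hr, hball⟩ := hball K hK
    refine ⟨r / 2, half_pos hr, fun z hz u ↦ ?_⟩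
    simpa only [exists_mem_image] using exists_half_mul_norm_le_inner hr (hball z hz) u

lemma isCost_of_forall_lt_norm {X Y U : Type*} [TopologicalSpace X] [SeminormedAddCommGroup Y]
    [ProperSpace Y] [TopologicalSpace U] {A : Set U} {ℓ : X → Y → U → ℝ} {u₀ : X → Y → ℝ}
    {c c' : ℝ} (hA : IsCompact A)
    (hℓ : Continuous fun w : X × Y × U ↦ ℓ w.1 w.2.1 w.2.2)
    (hcoer : ∀ B : Set X, IsCompact B →
      ∃ R : ℝ, ∀ y, R < ‖y‖ → ∀ x ∈ B, ∀ a ∈ A, c < ℓ x y a)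
    (hu₀ : Continuous fun z : X × Y ↦ u₀ z.1 z.2) (hc' : ∀ x y, c' ≤ u₀ x y) : IsCost A ℓ u₀ :=
  have hℓ' : Continuous fun w : (X × Y) × U ↦ ℓ w.1.1 w.1.2 w.2 :=
    hℓ.comp (by fun_prop : Continuous fun w : (X × Y) × U ↦ (w.1.1, w.1.2, w.2))
  { continuous_running := hℓ'
    continuous_terminal := hu₀
    exists_running_ge := fun B hB ↦
      let ⟨_, hR⟩ := hcoer B hB
      exists_forall_le_of_forall_lt_norm hA hB hℓ' hR
    exists_terminal_ge := fun _ _ ↦ ⟨c', fun x _ ↦ hc' x⟩ }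

theorem statement7_general {X Y U : Type*} [NormedAddCommGroup X] [NormedSpace ℝ X] [ProperSpace X]
    [NormedAddCommGroup Y] [InnerProductSpace ℝ Y] [ProperSpace Y]
    [MeasurableSpace U] [TopologicalSpace U] [TopologicalSpace.PseudoMetrizableSpace U]
    [SecondCountableTopology U] [OpensMeasurableSpace U]
    {A : Set U} {f : X → Y → U → X} {g : X → Y → U → Y} {ℓ : X → Y → U → ℝ} {u₀ : X → Y → ℝ}
    {L : ℝ≥0} {Q t : ℝ}
    (hA : IsCompact A) (h : IsSlowFastSystem A f g L Q)
    (hc : IsCost A ℓ u₀) (x : X) (y y' : Y) (ht : 0 < t) :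
    lowerLim (fun ε (z : X × Y × ℝ) ↦ slowFastValue A f g ℓ u₀ ε (z.1, z.2.1) z.2.2) (x, y, t) =
      lowerLim (fun ε (z : X × Y × ℝ) ↦ slowFastValue A f g ℓ u₀ ε (z.1, z.2.1) z.2.2)
        (x, y', t) ∧
    upperLim (fun ε (z : X × Y × ℝ) ↦ slowFastValue A f g ℓ u₀ ε (z.1, z.2.1) z.2.2) (x, y, t) =
      upperLim (fun ε (z : X × Y × ℝ) ↦ slowFastValue A f g ℓ u₀ ε (z.1, z.2.1) z.2.2)
        (x, y', t) :=
  ⟨(h.lowerLim_slowFastValue_le hA hc x y y' ht).antisymm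
      (h.lowerLim_slowFastValue_le hA hc x y' y ht),
    (h.upperLim_slowFastValue_le hA hc x y y' ht).antisymm
      (h.upperLim_slowFastValue_le hA hc x y' y ht)⟩

end

theorem statement7
    {N M k : ℕ} (A : Set (Euc k)) (hA : IsCompact A) (hAne : A.Nonempty)
    (f : Euc N → Euc M → Euc k → Euc N) (g : Euc N → Euc M → Euc k → Euc M)
    (L0 Q0 : ℝ) (hL0 : 0 < L0) (hQ0 : 0 < Q0)
    (hfLip : ∀ (x₁ x₂ : Euc N) (y₁ y₂ : Euc M), ∀ a ∈ A,
      ‖f x₁ y₁ a - f x₂ y₂ a‖ ≤ L0 * (‖x₁ - x₂‖ + ‖y₁ - y₂‖))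
    (hgLip : ∀ (x₁ x₂ : Euc N) (y₁ y₂ : Euc M), ∀ a ∈ A,
      ‖g x₁ y₁ a - g x₂ y₂ a‖ ≤ L0 * (‖x₁ - x₂‖ + ‖y₁ - y₂‖))
    (hfBdd : ∀ x y, ∀ a ∈ A, ‖f x y a‖ ≤ Q0)
    (hctrl : ∀ K : Set (Euc N × Euc M), IsCompact K → ∃ r > 0, ∀ z ∈ K,
      Metric.ball (0 : Euc M) r ⊆ closure (convexHull ℝ ((fun a => g z.1 z.2 a) '' A)))
    (ℓ : Euc N → Euc M → Euc k → ℝ)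
    (hlCont : Continuous fun z : Euc N × Euc M × Euc k => ℓ z.1 z.2.1 z.2.2)
    (hlCoer : ∀ B : Set (Euc N), IsCompact B → ∀ c : ℝ, ∃ R : ℝ,
      ∀ y : Euc M, R < ‖y‖ → ∀ x ∈ B, ∀ a ∈ A, c < ℓ x y a)
    (u0 : Euc N → Euc M → ℝ)
    (hu0Cont : Continuous fun z : Euc N × Euc M => u0 z.1 z.2)
    (hu0Bdd : ∀ x y, -Q0 ≤ u0 x y)
 :
    ∀ (x0 : Euc N) (y0 z0 : Euc M) (t0 : ℝ), 0 < t0 →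
      lowerLim (fun ε (z : Euc N × Euc M × ℝ) => valueFun A f g ℓ u0 ε z.1 z.2.1 z.2.2)
        (x0, y0, t0) =
      lowerLim (fun ε (z : Euc N × Euc M × ℝ) => valueFun A f g ℓ u0 ε z.1 z.2.1 z.2.2)
        (x0, z0, t0) ∧
      upperLim (fun ε (z : Euc N × Euc M × ℝ) => valueFun A f g ℓ u0 ε z.1 z.2.1 z.2.2)
        (x0, y0, t0) =
      upperLim (fun ε (z : Euc N × Euc M × ℝ) => valueFun A f g ℓ u0 ε z.1 z.2.1 z.2.2)
        (x0, z0, t0) := by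
  intro x0 y0 z0 t0 ht0
  simpa only [lowerLim_valueFun, upperLim_valueFun] using statement7_general hA
    (isSlowFastSystem_of_ball_subset_closure_convexHull hL0.le hfLip hgLip hfBdd hctrl)
    (isCost_of_forall_lt_norm hA hlCont (hlCoer · · 0) hu0Cont hu0Bdd) x0 y0 z0 ht0
end

section
/- Under assumptions (H1)–(H4), fix (x0,p0) ∈ ℝ^N × ℝ^N with c0 = H̄(x0,p0) finite. Suppose b ≥ c0 is such that the equation H0(y,Du) = b admits a coercive viscosity solution on ℝ^M (a solution w with w(y) → +∞ as |y| → +∞) and such that for every compact K ⊆ ℝ^M one has inf_{y0 ∈ K} S_b(y, y0) → +∞ as |y| → +∞. Then b = c0 and the Aubry set 𝒜0 of H0 is nonempty. -/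
open Set MeasureTheory Metric Filter
open scoped RealInnerProductSpace Topology

/-!
A subsolution of the Hamilton–Jacobi–Bellman equation at level `c` is a common viscosity
subsolution of the transport equations `-Du·G_a = c + E_a`, one for each control `a`. This
description is stable under averaging, under scaling by `1 - μ` where `E` is bounded below, and
under smooth capping from above, which costs an arbitrarily small amount of the level. A capped
subsolution lies below the coercive supersolution `w` at infinity, so doubling of variables gives
`b ≤ c` for every subsolution level `c`, that is, `b = c₀`.

If the Aubry set were empty, averaging finitely many locally strict critical subsolutions would give
one that is strict on a large ball. Outside the ball the coercivity of `E` makes multiplication by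
`1 - μ` gain in level, while on the ball it loses little; the result is a subsolution below the
critical level.

The intrinsic distance serves to exclude an infinite Hamiltonian, for which `sSup` returns `0`: the
sublevels would then be the whole space, and so the distance would vanish.
-/

section Penalization

lemma exists_contDiff_eventuallyEq {V : Type*} [NormedAddCommGroup V] [NormedSpace ℝ V]
    [HasContDiffBump V] {ψ : V → ℝ} {y : V} (hψ : ContDiffAt ℝ 1 ψ y) :
    ∃ ψ' : V → ℝ, ContDiff ℝ 1 ψ' ∧ ψ' =ᶠ[𝓝 y] ψ := by
  obtain ⟨r, hr, hball⟩ := Metric.nhds_basis_ball.eventually_iff.1 (hψ.eventually (by simp))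
  let χ : ContDiffBump y := ⟨r / 4, r / 2, by positivity, by linarith⟩
  refine ⟨fun z => χ z * ψ z, contDiff_iff_contDiffAt.2 fun z => ?_, ?_⟩
  · by_cases hz : z ∈ ball y r
    · exact χ.contDiff.contDiffAt.mul (hball hz)
    · have hz' : z ∈ (closedBall y (r / 2))ᶜ := fun h =>
        hz (closedBall_subset_ball (by linarith) h)
      refine contDiffAt_const (c := (0 : ℝ)).congr_of_eventuallyEq ?_
      filter_upwards [isClosed_closedBall.isOpen_compl.mem_nhds hz'] with x hx
      have hχ : χ x = 0 := χ.zero_of_le_dist (le_of_lt (by simpa using hx))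
      simp only [hχ, zero_mul]
  · filter_upwards [χ.eventuallyEq_one] with z hz
    simp only [hz, Pi.one_apply, one_mul]

lemma exists_isMaxOn_sub_penalty {Z : Type*} [TopologicalSpace Z] {F D : Z → ℝ} {C : Set Z}
    {z₀ : Z} {Q : Z → Prop} (hF : UpperSemicontinuous F) (hD : Continuous D)
    (hD_nonneg : ∀ z, 0 ≤ D z) (hC : IsCompact C) (hz₀ : z₀ ∈ C) (hDz₀ : D z₀ = 0)
    (hQ : ∀ z ∈ C, D z = 0 → F z₀ ≤ F z → ∀ᶠ z' in 𝓝 z, Q z') :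
    ∃ n : ℕ, ∃ z ∈ C, Q z ∧ IsMaxOn (fun z' => F z' - n * D z') C z ∧
      F z₀ ≤ F z - n * D z := by
  have hlocal : ∀ z ∈ C, ∀ᶠ p : ℕ × Z in atTop ×ˢ 𝓝 z,
      Q p.2 ∨ F p.2 - p.1 * D p.2 < F z₀ := by
    intro z hz
    by_cases hzero : D z = 0
    · by_cases hmax : F z₀ ≤ F z
      · exact (tendsto_snd.eventually (hQ z hz hzero hmax)).mono fun p hp => Or.inl hp
      · filter_upwards [tendsto_snd.eventually (hF z _ (not_le.1 hmax))] with p hp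
        exact Or.inr (by nlinarith [mul_nonneg p.1.cast_nonneg (hD_nonneg p.2)])
    · have hDz : 0 < D z := lt_of_le_of_ne (hD_nonneg z) (Ne.symm hzero)
      obtain ⟨n₀, hn₀⟩ := exists_nat_gt ((F z + 1 - F z₀) / (D z / 2))
      rw [div_lt_iff₀ (by positivity)] at hn₀
      filter_upwards [tendsto_fst.eventually (eventually_ge_atTop n₀),
        tendsto_snd.eventually (hF z (F z + 1) (lt_add_one _)),
        tendsto_snd.eventually (hD.continuousAt.eventually_const_lt (half_lt_self hDz))]
        with p hn hFp hDp
      have hpen : (n₀ : ℝ) * (D z / 2) ≤ p.1 * D p.2 :=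
        mul_le_mul (Nat.cast_le.2 hn) hDp.le (by positivity) (Nat.cast_nonneg _)
      exact Or.inr (by linarith)
  have hglobal : ∀ᶠ p : ℕ × Z in atTop ×ˢ 𝓝ˢ C, Q p.2 ∨ F p.2 - p.1 * D p.2 < F z₀ :=
    hC.mem_prod_nhdsSet_of_forall hlocal
  obtain ⟨n, hn⟩ := hglobal.curry.exists
  have husc : UpperSemicontinuous fun z => F z + -(n * D z) :=
    hF.add (by fun_prop : Continuous fun z => -(n * D z)).upperSemicontinuous
  simp only [← sub_eq_add_neg] at husc
  obtain ⟨z, hz, hmax⟩ := (husc.upperSemicontinuousOn C).exists_isMaxOn ⟨z₀, hz₀⟩ hC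
  have hz₀z : F z₀ ≤ F z - n * D z := by simpa [hDz₀] using hmax hz₀
  exact ⟨n, z, hz, (hn.self_of_nhdsSet z hz).resolve_right hz₀z.not_gt, hmax, hz₀z⟩

lemma exists_doubling_max {V : Type*} [NormedAddCommGroup V] {u₁ u₂ : V → ℝ} {K : Set V}
    {y₀ : V} {P : V → V → Prop} {ε : ℝ} (hu₁ : UpperSemicontinuous u₁)
    (hu₂ : UpperSemicontinuous u₂) (hK : IsCompact K) (hy₀ : y₀ ∈ K)
    (hmax : IsMaxOn (fun z => u₁ z + u₂ z) K y₀)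
    (hP : ∀ z ∈ K, u₁ y₀ + u₂ y₀ ≤ u₁ z + u₂ z →
      K ∈ 𝓝 z ∧ ∀ᶠ p : V × V in 𝓝 (z, z), P p.1 p.2) (hε : 0 < ε) :
    ∃ (n : ℕ) (x y : V), P x y ∧ n * ‖x - y‖ ^ 2 < ε ∧
      IsLocalMax (fun x' => u₁ x' - n * ‖x' - y‖ ^ 2) x ∧
      IsLocalMax (fun y' => u₂ y' - n * ‖x - y'‖ ^ 2) y := by
  have hF : UpperSemicontinuous fun p : V × V => u₁ p.1 + u₂ p.2 :=
    (hu₁.comp continuous_fst).add (hu₂.comp continuous_snd)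
  obtain ⟨n, ⟨x, y⟩, -, ⟨hPxy, hx, hy, hlt⟩, hmaxOn, hge⟩ := exists_isMaxOn_sub_penalty
    (D := fun p : V × V => ‖p.1 - p.2‖ ^ 2) (C := K ×ˢ K) (z₀ := (y₀, y₀))
    (Q := fun p => P p.1 p.2 ∧ K ∈ 𝓝 p.1 ∧ K ∈ 𝓝 p.2 ∧ u₁ p.1 + u₂ p.2 < u₁ y₀ + u₂ y₀ + ε)
    hF (by fun_prop) (fun p => sq_nonneg _) (hK.prod hK) ⟨hy₀, hy₀⟩ (by simp) <| by
      rintro ⟨z, z'⟩ ⟨hz, -⟩ hD hge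
      obtain rfl : z = z' := by simpa [sub_eq_zero] using hD
      obtain ⟨hKz, hPz⟩ := hP z hz hge
      filter_upwards [hPz, continuousAt_fst.preimage_mem_nhds (eventually_mem_nhds_iff.2 hKz),
        continuousAt_snd.preimage_mem_nhds (eventually_mem_nhds_iff.2 hKz),
        hF (z, z) (u₁ y₀ + u₂ y₀ + ε) ((hmax hz).trans_lt (lt_add_of_pos_right _ hε))]
        with p hp hp₁ hp₂ hlt using ⟨hp, hp₁, hp₂, hlt⟩
  refine ⟨n, x, y, hPxy, by linarith, ?_, ?_⟩
  · filter_upwards [hx] with x' hx'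
    have hle : u₁ x' + u₂ y - n * ‖x' - y‖ ^ 2 ≤ u₁ x + u₂ y - n * ‖x - y‖ ^ 2 :=
      hmaxOn (Set.mk_mem_prod hx' (mem_of_mem_nhds hy))
    linarith
  · filter_upwards [hy] with y' hy'
    have hle : u₁ x + u₂ y' - n * ‖x - y'‖ ^ 2 ≤ u₁ x + u₂ y - n * ‖x - y‖ ^ 2 :=
      hmaxOn (Set.mk_mem_prod (mem_of_mem_nhds hx) hy')
    linarith

/-- Subtracting `‖x - y₀‖ ^ 2` makes the maximum at `y₀` strict, so that the doubled maxima
concentrate at `(y₀, y₀)`. -/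
lemma exists_doubling_of_isLocalMax {V : Type*} [NormedAddCommGroup V] [ProperSpace V]
    {u₁ u₂ : V → ℝ} {y₀ : V} {P : V → V → Prop} {ε : ℝ} (hu₁ : UpperSemicontinuous u₁)
    (hu₂ : UpperSemicontinuous u₂) (hmax : IsLocalMax (fun z => u₁ z + u₂ z) y₀)
    (hP : ∀ᶠ p : V × V in 𝓝 (y₀, y₀), P p.1 p.2) (hε : 0 < ε) :
    ∃ (n : ℕ) (x y : V), P x y ∧ n * ‖x - y‖ ^ 2 < ε ∧
      IsLocalMax (fun x' => u₁ x' + -‖x' - y₀‖ ^ 2 - n * ‖x' - y‖ ^ 2) x ∧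
      IsLocalMax (fun y' => u₂ y' - n * ‖x - y'‖ ^ 2) y := by
  obtain ⟨ρ, hρ, hball⟩ := nhds_basis_closedBall.eventually_iff.1 hmax
  have hstrict : ∀ z ∈ closedBall y₀ ρ,
      u₁ z + -‖z - y₀‖ ^ 2 + u₂ z + ‖z - y₀‖ ^ 2 ≤ u₁ y₀ + -‖y₀ - y₀‖ ^ 2 + u₂ y₀ :=
    fun z hz => by
      have := hball hz
      simp only [sub_self, norm_zero]
      linarith
  refine exists_doubling_max
    (hu₁.add (by fun_prop : Continuous fun z => -‖z - y₀‖ ^ 2).upperSemicontinuous) hu₂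
    (isCompact_closedBall y₀ ρ) (mem_closedBall_self hρ.le)
    (fun z hz => (le_add_of_nonneg_right (sq_nonneg _)).trans (hstrict z hz))
    (fun z hz hle => ?_) hε
  have hzero : ‖z - y₀‖ ^ 2 ≤ 0 := by linarith [hstrict z hz]
  obtain rfl : z = y₀ := by simpa [sub_eq_zero] using le_antisymm hzero (sq_nonneg _)
  exact ⟨closedBall_mem_nhds z hρ, hP⟩

end Penalization

section TransportSubsolutions

/-- Viscosity subsolutions `u` of the transport equation `-Du(y)·X(y) = h(y)` on the whole space.
A subsolution of a Hamilton–Jacobi–Bellman equation is a common subsolution of the transport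
equations of all the controls. -/
def IsTransportSubsol {V : Type*} [NormedAddCommGroup V] [NormedSpace ℝ V]
    (X : V → V) (h u : V → ℝ) : Prop :=
  UpperSemicontinuous u ∧ ∀ ψ : V → ℝ, ContDiff ℝ 1 ψ → ∀ y,
    IsLocalMax (fun z => u z - ψ z) y → -(fderiv ℝ ψ y (X y)) ≤ h y

lemma hasFDerivAt_const_mul_norm_sub_sq {V : Type*} [NormedAddCommGroup V]
    [InnerProductSpace ℝ V] (c : ℝ) (p x : V) :
    HasFDerivAt (fun z => c * ‖z - p‖ ^ 2) ((2 * c) • innerSL ℝ (x - p)) x := by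
  have h := ((hasFDerivAt_id x).sub_const p).norm_sq.const_mul c
  refine h.congr_fderiv (ContinuousLinearMap.ext fun v => ?_)
  simp only [id_eq, ContinuousLinearMap.comp_id, smul_apply, nsmul_eq_mul,
    smul_eq_mul, Nat.cast_ofNat, coe_innerSL_apply]
  ring

lemma contDiff_const_mul_norm_sub_sq {V : Type*} [NormedAddCommGroup V]
    [InnerProductSpace ℝ V] (c : ℝ) (p : V) : ContDiff ℝ 1 fun z => c * ‖z - p‖ ^ 2 :=
  contDiff_const.mul ((contDiff_id.sub contDiff_const).norm_sq ℝ)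

lemma inner_sub_add_inner_sub_le {V : Type*} [NormedAddCommGroup V] [InnerProductSpace ℝ V]
    {X : V → V} {L : NNReal} (hX : LipschitzWith L X) (x y : V) :
    ⟪x - y, X x⟫ + ⟪y - x, X y⟫ ≤ L * ‖x - y‖ ^ 2 :=
  calc ⟪x - y, X x⟫ + ⟪y - x, X y⟫ = ⟪x - y, X x - X y⟫ := by
        rw [inner_sub_right, ← neg_sub x y, inner_neg_left, ← sub_eq_add_neg]
    _ ≤ ‖x - y‖ * ‖X x - X y‖ := real_inner_le_norm _ _
    _ ≤ ‖x - y‖ * (L * ‖x - y‖) := by gcongr; exact hX.norm_sub_le x y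
    _ = L * ‖x - y‖ ^ 2 := by ring

namespace IsTransportSubsol

variable {V : Type*} [NormedAddCommGroup V] {X : V → V} {h h₁ h₂ u u₁ u₂ : V → ℝ}

lemma mono [NormedSpace ℝ V] (hu : IsTransportSubsol X h₁ u) (hle : h₁ ≤ h₂) :
    IsTransportSubsol X h₂ u :=
  ⟨hu.1, fun ψ hψ y hmax => (hu.2 ψ hψ y hmax).trans (hle y)⟩

lemma neg_apply_le [NormedSpace ℝ V] [HasContDiffBump V] (hu : IsTransportSubsol X h u)
    {ψ : V → ℝ} {ψ' : V →L[ℝ] ℝ} {y : V} (hψ : ContDiffAt ℝ 1 ψ y) (hψ' : HasFDerivAt ψ ψ' y)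
    (hmax : IsLocalMax (fun z => u z - ψ z) y) : -ψ' (X y) ≤ h y := by
  obtain ⟨χ, hχ, hχψ⟩ := exists_contDiff_eventuallyEq hψ
  have hχmax : IsLocalMax (fun z => u z - χ z) y :=
    hmax.congr (hχψ.symm.mono fun z hz => by simp only [hz])
  simpa only [(hψ'.congr_of_eventuallyEq hχψ).fderiv] using hu.2 χ hχ y hχmax

/-- A test function `ψ` touching `φ ∘ u` from above becomes the test function `θ ∘ ψ`
touching `u` from above. -/
lemma comp [NormedSpace ℝ V] [HasContDiffBump V] {φ θ : ℝ → ℝ} {I : Set ℝ}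
    (hu : IsTransportSubsol X h u)
    (hφ : Continuous φ) (hφ_mono : Monotone φ) (hI : IsOpen I) (hφI : ∀ s, φ s ∈ I)
    (hθφ : Function.LeftInverse θ φ) (hθ : ContDiffOn ℝ 1 θ I) (hθ_mono : MonotoneOn θ I)
    (hθ_pos : ∀ t ∈ I, 0 < deriv θ t) :
    IsTransportSubsol X (fun y => h y / deriv θ (φ (u y))) (φ ∘ u) := by
  refine ⟨hφ.comp_upperSemicontinuous hu.1 hφ_mono, fun ψ hψ y hmax => ?_⟩
  let χ : V → ℝ := fun z => ψ z + (φ (u y) - ψ y)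
  have hχy : χ y = φ (u y) := add_sub_cancel _ _
  have hχ : ContDiff ℝ 1 χ := hψ.add contDiff_const
  have hχI : ∀ᶠ z in 𝓝 y, χ z ∈ I :=
    hχ.continuous.continuousAt.eventually_mem (hI.mem_nhds (hχy ▸ hφI _))
  have hθy : ContDiffAt ℝ 1 θ (χ y) := hθ.contDiffAt (hI.mem_nhds (hχy ▸ hφI _))
  have hθχmax : IsLocalMax (fun z => u z - θ (χ z)) y := by
    filter_upwards [hmax, hχI] with z hz hzI
    have hle : φ (u z) ≤ χ z := by simp only [χ, Function.comp_apply] at hz ⊢; linarith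
    have := hθ_mono (hφI _) hzI hle
    rw [hθφ (u z)] at this
    rw [hχy, hθφ (u y)]
    linarith
  have key := hu.neg_apply_le (hθy.comp y hχ.contDiffAt)
    ((hθy.differentiableAt one_ne_zero).hasDerivAt.comp_hasFDerivAt y
      ((hψ.differentiable one_ne_zero y).hasFDerivAt.add_const _)) hθχmax
  rw [le_div_iff₀ (hθ_pos _ (hφI _)), ← hχy]
  simp only [smul_apply, smul_eq_mul] at key
  linarith

lemma const_mul [NormedSpace ℝ V] [HasContDiffBump V] (hu : IsTransportSubsol X h u) {r : ℝ}
    (hr : 0 < r) : IsTransportSubsol X (fun y => r * h y) ((r * ·) ∘ u) := by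
  have hderiv : deriv (fun t : ℝ => r⁻¹ * t) = fun _ => r⁻¹ := by
    funext t
    simp
  have := hu.comp (φ := fun s => r * s) (θ := fun t => r⁻¹ * t) (continuous_const_mul r)
    (monotone_mul_left_of_nonneg hr.le) isOpen_univ (fun _ => mem_univ _)
    (fun s => inv_mul_cancel_left₀ hr.ne' s) (contDiff_const.mul contDiff_id).contDiffOn
    ((monotone_mul_left_of_nonneg (inv_nonneg.2 hr.le)).monotoneOn _)
    (fun _ _ => by simpa [hderiv] using hr)
  simpa only [hderiv, div_inv_eq_mul, mul_comm _ r] using this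

lemma neg_fderiv_le_of_doubling [InnerProductSpace ℝ V] {L : NNReal} (hX : LipschitzWith L X)
    (hu₁ : IsTransportSubsol X h₁ u₁) (hu₂ : IsTransportSubsol X h₂ u₂) {ψ : V → ℝ}
    (hψ : ContDiff ℝ 1 ψ) {n : ℕ} {x y : V}
    (hx : IsLocalMax (fun x' => u₁ x' - (ψ x' + n * ‖x' - y‖ ^ 2)) x)
    (hy : IsLocalMax (fun y' => u₂ y' - n * ‖y' - x‖ ^ 2) y) :
    -(fderiv ℝ ψ x (X x)) ≤ h₁ x + h₂ y + 2 * L * (n * ‖x - y‖ ^ 2) := by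
  have hsub₁ : -(fderiv ℝ ψ x (X x) + 2 * n * ⟪x - y, X x⟫) ≤ h₁ x := by
    simpa only [add_apply, smul_apply, smul_eq_mul, coe_innerSL_apply] using
      hu₁.neg_apply_le (hψ.add (contDiff_const_mul_norm_sub_sq n y)).contDiffAt
      ((hψ.differentiable one_ne_zero x).hasFDerivAt.add
        (hasFDerivAt_const_mul_norm_sub_sq n y x)) hx
  have hsub₂ : -(2 * n * ⟪y - x, X y⟫) ≤ h₂ y := by
    simpa only [smul_apply, smul_eq_mul, coe_innerSL_apply] using
      hu₂.neg_apply_le (contDiff_const_mul_norm_sub_sq n x).contDiffAt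
      (hasFDerivAt_const_mul_norm_sub_sq n x y) hy
  have hLip : 2 * n * (⟪x - y, X x⟫ + ⟪y - x, X y⟫) ≤ 2 * n * (L * ‖x - y‖ ^ 2) := by
    gcongr
    exact inner_sub_add_inner_sub_le hX x y
  linarith

lemma add [InnerProductSpace ℝ V] [ProperSpace V] {L : NNReal} (hX : LipschitzWith L X)
    (hh₁ : UpperSemicontinuous h₁) (hh₂ : UpperSemicontinuous h₂)
    (hu₁ : IsTransportSubsol X h₁ u₁) (hu₂ : IsTransportSubsol X h₂ u₂) :
    IsTransportSubsol X (h₁ + h₂) (u₁ + u₂) := by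
  refine ⟨hu₁.1.add hu₂.1, fun ψ hψ y₀ hmax => ?_⟩
  let χ : V → ℝ := fun z => ψ z + 1 * ‖z - y₀‖ ^ 2
  have hχ : ContDiff ℝ 1 χ := hψ.add (contDiff_const_mul_norm_sub_sq 1 y₀)
  have hχ' : fderiv ℝ χ y₀ = fderiv ℝ ψ y₀ := by
    have := ((hψ.differentiable one_ne_zero y₀).hasFDerivAt.add
      (hasFDerivAt_const_mul_norm_sub_sq 1 y₀ y₀)).fderiv
    rwa [sub_self, map_zero, smul_zero, add_zero] at this
  let T : V × V → ℝ := fun p => h₁ p.1 + h₂ p.2 + fderiv ℝ χ p.1 (X p.1)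
  have hT : UpperSemicontinuous T := by
    have := hX.continuous
    have := hχ.continuous_fderiv one_ne_zero
    exact ((hh₁.comp continuous_fst).add (hh₂.comp continuous_snd)).add
      (Continuous.upperSemicontinuous (by fun_prop))
  suffices hTy₀ : 0 ≤ T (y₀, y₀) by
    simp only [T, hχ'] at hTy₀
    simp only [Pi.add_apply]
    linarith
  refine le_of_forall_pos_le_add fun ε hε => ?_
  obtain ⟨η, hη, hηε⟩ := exists_pos_mul_lt (half_pos hε) (2 * (L : ℝ))
  obtain ⟨n, x, y, hTxy, hn, hx, hy⟩ := exists_doubling_of_isLocalMax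
    (u₁ := fun z => u₁ z + -ψ z) (P := fun x y => T (x, y) < T (y₀, y₀) + ε / 2)
    (hu₁.1.add hψ.continuous.neg.upperSemicontinuous) hu₂.1
    (hmax.congr (.of_forall fun z => by simp only [Pi.add_apply]; ring))
    (hT (y₀, y₀) _ (lt_add_of_pos_right _ (half_pos hε))) hη
  have hdoubling := neg_fderiv_le_of_doubling (n := n) (y := y) hX hu₁ hu₂ hχ
    (hx.congr (.of_forall fun z => by simp only [χ]; ring))
    (by simpa only [norm_sub_rev x] using hy)
  have hLη : 2 * L * (n * ‖x - y‖ ^ 2) ≤ 2 * L * η := by gcongr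
  simp only [T] at hTxy ⊢
  linarith

end IsTransportSubsol

end TransportSubsolutions

section SoftCap

/-- A smooth, strictly negative minorant of the identity: the negative root `t` of
`t - t⁻¹ = s`. Composing a subsolution with it yields a subsolution bounded from above. -/
noncomputable def softCap (s : ℝ) : ℝ := (s - √(s ^ 2 + 4)) / 2

lemma abs_lt_sqrt_sq_add_four (s : ℝ) : |s| < √(s ^ 2 + 4) :=
  Real.lt_sqrt_of_sq_lt (by rw [sq_abs]; linarith)

lemma softCap_neg (s : ℝ) : softCap s < 0 := by
  have := (le_abs_self s).trans_lt (abs_lt_sqrt_sq_add_four s)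
  unfold softCap
  linarith

lemma softCap_le_self (s : ℝ) : softCap s ≤ s := by
  have := (neg_le_abs s).trans_lt (abs_lt_sqrt_sq_add_four s)
  unfold softCap
  linarith

lemma softCap_sub_inv (s : ℝ) : softCap s - (softCap s)⁻¹ = s := by
  have hroot : softCap s * softCap s - s * softCap s = 1 := by
    have := Real.mul_self_sqrt (by positivity : 0 ≤ s ^ 2 + 4)
    unfold softCap
    linarith
  have := (softCap_neg s).ne
  field_simp
  linarith

lemma continuous_softCap : Continuous softCap := by
  unfold softCap
  fun_prop

lemma strictMonoOn_sub_inv_Iio : StrictMonoOn (fun t : ℝ => t - t⁻¹) (Iio 0) := by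
  intro s hs t ht hst
  have := inv_lt_inv_of_neg ht hs |>.2 hst
  simp only
  linarith

lemma monotone_softCap : Monotone softCap := fun s t hst =>
  (strictMonoOn_sub_inv_Iio.le_iff_le (softCap_neg s) (softCap_neg t)).1
    (by simpa only [softCap_sub_inv] using hst)

lemma IsTransportSubsol.softCap_comp {V : Type*} [NormedAddCommGroup V] [NormedSpace ℝ V]
    [HasContDiffBump V] {X : V → V} {h u : V → ℝ} (hu : IsTransportSubsol X h u) :
    IsTransportSubsol X (fun y => h y / (1 + (softCap (u y) ^ 2)⁻¹)) (softCap ∘ u) := by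
  have hderiv : ∀ t : ℝ, t ∈ Iio 0 → deriv (fun t => t - t⁻¹) t = 1 + (t ^ 2)⁻¹ := fun t ht =>
    ((hasDerivAt_id' t).sub (hasDerivAt_inv (ne_of_lt ht))).deriv.trans (sub_neg_eq_add _ _)
  have := hu.comp (θ := fun t => t - t⁻¹) continuous_softCap monotone_softCap isOpen_Iio
    softCap_neg softCap_sub_inv
    (contDiffOn_id.sub (contDiffOn_id.inv fun t ht => ne_of_lt ht))
    strictMonoOn_sub_inv_Iio.monotoneOn (fun t ht => by rw [hderiv t ht]; positivity)
  simpa only [hderiv _ (softCap_neg _)] using this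

lemma IsTransportSubsol.sub_const {V : Type*} [NormedAddCommGroup V] [NormedSpace ℝ V]
    {X : V → V} {h u : V → ℝ} (hu : IsTransportSubsol X h u) (m : ℝ) :
    IsTransportSubsol X h (fun y => u y - m) := by
  refine ⟨by simpa only [sub_eq_add_neg] using hu.1.add upperSemicontinuous_const,
    fun ψ hψ y hmax => hu.2 ψ hψ y ?_⟩
  filter_upwards [hmax] with z hz
  linarith

lemma div_one_add_inv_sq_le {h t ε S : ℝ} (hS : 0 < S) (ht : t ≤ -S) (hh : -h ≤ ε * S ^ 2)
    (hε : 0 ≤ ε) : h / (1 + (t ^ 2)⁻¹) ≤ h + ε := by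
  have hSt : S ^ 2 ≤ t ^ 2 := by nlinarith
  have ht2 : 0 < t ^ 2 := (by positivity : 0 < S ^ 2).trans_le hSt
  have hinv : -h * (t ^ 2)⁻¹ ≤ ε := by
    rw [← div_eq_mul_inv, div_le_iff₀ ht2]
    exact hh.trans (by gcongr)
  rw [div_le_iff₀ (by positivity)]
  linarith [mul_nonneg hε (inv_nonneg.2 ht2.le)]

/-- Where `h a` is negative, a compact set, `u` is shifted far down so that the derivative of
`softCap` is close to `1` there. -/
lemma exists_neg_isTransportSubsol {V ι : Type*} [NormedAddCommGroup V] [NormedSpace ℝ V]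
    [HasContDiffBump V] {A : Set ι} (hA : A.Nonempty) {G : ι → V → V} {h : ι → V → ℝ}
    {u : V → ℝ} (hu : ∀ a ∈ A, IsTransportSubsol (G a) (h a) u)
    (hcoer : ∀ᶠ y in cocompact V, ∀ a ∈ A, 0 ≤ h a y) {B : ℝ} (hB : ∀ a ∈ A, ∀ y, B ≤ h a y)
    {ε : ℝ} (hε : 0 < ε) :
    ∃ v : V → ℝ, (∀ y, v y < 0) ∧ ∀ a ∈ A, IsTransportSubsol (G a) (fun y => h a y + ε) v := by
  obtain ⟨K, hK, hKh⟩ := mem_cocompact.1 hcoer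
  obtain ⟨a₀, ha₀⟩ := hA
  obtain ⟨m, hm⟩ := ((hu a₀ ha₀).1.upperSemicontinuousOn K).bddAbove_of_isCompact hK
  let S := 1 + |B| / ε
  have hS : 1 ≤ S := le_add_of_nonneg_right (by positivity)
  have hBS : -B ≤ ε * S ^ 2 := by
    calc -B ≤ ε * (|B| / ε) := by rw [mul_div_cancel₀ _ hε.ne']; exact neg_le_abs B
      _ ≤ ε * S ^ 2 := by gcongr; nlinarith
  refine ⟨softCap ∘ fun y => u y - (m + S), fun y => softCap_neg _, fun a ha =>
    ((hu a ha).sub_const _).softCap_comp.mono fun y => ?_⟩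
  by_cases hy : y ∈ K
  · have hle : softCap (u y - (m + S)) ≤ -S :=
      (softCap_le_self _).trans (by linarith [hm (mem_image_of_mem u hy)])
    exact div_one_add_inv_sq_le (by linarith) hle (by linarith [hB a ha y]) hε.le
  · have hnonneg : 0 ≤ h a y := hKh hy a ha
    exact (div_le_self hnonneg (le_add_of_nonneg_right (by positivity))).trans (by linarith)

end SoftCap

section ControlHamiltonian

/-- The values `-q·G a y - E a y` over which the Hamiltonian of a control problem with dynamics
`G a` and running cost `E a` takes its supremum. -/
def controlVals {V ι : Type*} [NormedAddCommGroup V] [InnerProductSpace ℝ V] (A : Set ι)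
    (G : ι → V → V) (E : ι → V → ℝ) (y q : V) : Set ℝ :=
  (fun a => -⟪q, G a y⟫ - E a y) '' A

/-- The Hamiltonian of a control problem with dynamics `G a` and running cost `E a`. It takes the
junk value `0` at points where `controlVals` is unbounded. -/
noncomputable def controlHam {V ι : Type*} [NormedAddCommGroup V] [InnerProductSpace ℝ V]
    (A : Set ι) (G : ι → V → V) (E : ι → V → ℝ) (y q : V) : ℝ :=
  sSup (controlVals A G E y q)

variable {m : ℕ} {ι : Type*} {A : Set ι} {G : ι → Euc m → Euc m} {E : ι → Euc m → ℝ}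
  {b c : ℝ} {u : Euc m → ℝ}

lemma IsVSubOn.neg_fderiv_le {Ω : Set (Euc m)} (hu : IsVSubOn (controlHam A G E) c Ω u)
    (hbdd : 0 ≤ c → ∀ y q, BddAbove (controlVals A G E y q)) {ψ : Euc m → ℝ}
    (hψ : ContDiff ℝ 1 ψ) {y : Euc m} (hy : y ∈ Ω)
    (hmax : IsLocalMaxOn (fun z => u z - ψ z) Ω y) {a : ι} (ha : a ∈ A) :
    -(fderiv ℝ ψ y (G a y)) ≤ c + E a y := by
  have hle : controlHam A G E y (gradient ψ y) ≤ c := hu.2 ψ hψ y hy hmax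
  have hfin : BddAbove (controlVals A G E y (gradient ψ y)) := by
    by_contra hunbdd
    rw [controlHam, Real.sSup_of_not_bddAbove hunbdd] at hle
    exact hunbdd (hbdd hle y _)
  have hval : -⟪gradient ψ y, G a y⟫ - E a y ≤ c :=
    (le_csSup hfin (mem_image_of_mem _ ha)).trans hle
  rw [inner_gradient_left] at hval
  linarith

lemma IsVSubOn.isTransportSubsol (hu : IsVSubOn (controlHam A G E) c univ u)
    (hbdd : 0 ≤ c → ∀ y q, BddAbove (controlVals A G E y q)) {a : ι} (ha : a ∈ A) :
    IsTransportSubsol (G a) (fun y => c + E a y) u :=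
  ⟨upperSemicontinuousOn_univ_iff.1 hu.1, fun _ hψ y hmax =>
    hu.neg_fderiv_le hbdd hψ (mem_univ y) (hmax.on univ) ha⟩

lemma isVSubOn_controlHam (hA : A.Nonempty)
    (hu : ∀ a ∈ A, IsTransportSubsol (G a) (fun y => c + E a y) u) :
    IsVSubOn (controlHam A G E) c univ u := by
  obtain ⟨a₀, ha₀⟩ := hA
  refine ⟨(hu a₀ ha₀).1.upperSemicontinuousOn univ, fun ψ hψ y _ hmax =>
    csSup_le ((Set.nonempty_of_mem ha₀).image _) ?_⟩
  rintro _ ⟨a, ha, rfl⟩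
  have := (hu a ha).2 ψ hψ y (isLocalMaxOn_univ_iff.1 hmax)
  simp only [inner_gradient_left]
  linarith

lemma bddAbove_controlVals_of_smul {L : NNReal} (hG : ∀ a ∈ A, LipschitzWith L (G a)) {B : ℝ}
    (hEB : ∀ a ∈ A, ∀ y, B ≤ E a y) {y y' q : Euc m} {U t : ℝ} (hEU : ∀ a ∈ A, E a y ≤ U)
    (ht : 0 < t) (hbdd : BddAbove (controlVals A G E y (t • q))) :
    BddAbove (controlVals A G E y' q) := by
  obtain ⟨C, hC⟩ := hbdd
  refine ⟨t⁻¹ * (C + U) + ‖q‖ * (L * ‖y - y'‖) - B, ?_⟩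
  rintro _ ⟨a, ha, rfl⟩
  have hCa : -(t * ⟪q, G a y⟫) - E a y ≤ C := by
    simpa only [real_inner_smul_left] using hC (mem_image_of_mem _ ha)
  have hy : -⟪q, G a y⟫ ≤ t⁻¹ * (C + U) := by
    rw [← div_eq_inv_mul, le_div_iff₀ ht]
    linarith [hEU a ha]
  have hyy' : ⟪q, G a y - G a y'⟫ ≤ ‖q‖ * (L * ‖y - y'‖) :=
    (real_inner_le_norm _ _).trans (by gcongr; exact (hG a ha).norm_sub_le y y')
  rw [inner_sub_right] at hyy'
  linarith [hEB a ha y']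

lemma suppFn_controlHam_eq_zero {y q : Euc m} {s : ℝ} (hb : 0 ≤ b) (hq : q ≠ 0) (hs : 0 < s)
    (hunbdd : ∀ t : ℝ, 0 < t → ¬ BddAbove (controlVals A G E y (t • q))) :
    suppFn (controlHam A G E) b y (s • q) = 0 := by
  refine Real.sSup_of_not_bddAbove fun ⟨C, hC⟩ => ?_
  have hqq : 0 < s * ‖q‖ ^ 2 := by positivity
  let t := (|C| + 1) / (s * ‖q‖ ^ 2)
  have ht : 0 < t := by positivity
  have hmem : t • q ∈ sublevel (controlHam A G E) b y :=
    (Real.sSup_of_not_bddAbove (hunbdd t ht)).trans_le hb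
  have hle : ⟪t • q, s • q⟫ ≤ C := hC (mem_image_of_mem _ hmem)
  have hinner : ⟪t • q, s • q⟫ = t * (s * ‖q‖ ^ 2) := by
    rw [real_inner_smul_left, real_inner_smul_right, real_inner_self_eq_norm_sq]
  rw [hinner, div_mul_cancel₀ _ hqq.ne'] at hle
  linarith [le_abs_self C]

lemma intrinsicDist_nonpos {F : Euc m → Euc m → ℝ} {y₁ y₂ : Euc m}
    (h : ∀ y, suppFn F b y (y₂ - y₁) = 0) : intrinsicDist F b y₁ y₂ ≤ 0 := by
  have hlen : intrinsicLen F b (AffineMap.lineMap y₁ y₂) = 0 := by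
    have hderiv : deriv (AffineMap.lineMap (k := ℝ) y₁ y₂) = fun _ => y₂ - y₁ :=
      funext fun s => AffineMap.hasDerivAt_lineMap.deriv
    simp only [intrinsicLen, hderiv, h, intervalIntegral.integral_zero]
  have hmem : (0 : ℝ) ∈ {l | ∃ ξ, IsAdmCurve ξ y₁ y₂ ∧ l = intrinsicLen F b ξ} :=
    ⟨AffineMap.lineMap y₁ y₂, ⟨⟨_, lipschitzWith_lineMap y₁ y₂⟩, AffineMap.lineMap_apply_zero _ _,
      AffineMap.lineMap_apply_one _ _⟩, hlen.symm⟩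
  by_cases hbdd : BddBelow {l | ∃ ξ, IsAdmCurve ξ y₁ y₂ ∧ l = intrinsicLen F b ξ}
  · exact csInf_le hbdd hmem
  · exact (Real.sInf_of_not_bddBelow hbdd).le

/-- An unbounded direction `q` would make the Hamiltonian take the junk value `0` along the whole
ray through `q`, at every point; then also `suppFn` takes the junk value `0` in the direction `q`,
and straight lines in this direction have length `0`. -/
lemma bddAbove_controlVals {L : NNReal} (hG : ∀ a ∈ A, LipschitzWith L (G a)) {B : ℝ}
    (hEB : ∀ a ∈ A, ∀ y, B ≤ E a y) (hEU : ∀ y, ∃ U, ∀ a ∈ A, E a y ≤ U) (hb : 0 ≤ b)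
    (hdist : ∀ᶠ y in cocompact (Euc m), 0 < intrinsicDist (controlHam A G E) b y 0)
    (y q : Euc m) : BddAbove (controlVals A G E y q) := by
  rcases eq_or_ne q 0 with rfl | hq
  · refine ⟨-B, ?_⟩
    rintro _ ⟨a, ha, rfl⟩
    simpa using hEB a ha y
  by_contra hunbdd
  have hzero : ∀ s : ℝ, 0 < s → ∀ y', suppFn (controlHam A G E) b y' (s • q) = 0 :=
    fun s hs y' => suppFn_controlHam_eq_zero hb hq hs fun t ht hbdd =>
      hunbdd (bddAbove_controlVals_of_smul hG hEB (hEU y').choose_spec ht hbdd)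
  rw [← cobounded_eq_cocompact, hasBasis_cobounded_norm.eventually_iff] at hdist
  obtain ⟨R, -, hR⟩ := hdist
  let s := (|R| + 1) / ‖q‖
  have hs : 0 < s := by positivity
  refine (hR (x := -(s • q)) ?_).not_ge (intrinsicDist_nonpos fun y' => ?_)
  · have : ‖-(s • q)‖ = |R| + 1 := by
      rw [norm_neg, norm_smul, Real.norm_of_nonneg hs.le, div_mul_cancel₀ _ (norm_ne_zero_iff.2 hq)]
    rw [mem_ofPred_eq, this]
    linarith [le_abs_self R]
  · rw [zero_sub, neg_neg]
    exact hzero s hs y'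

end ControlHamiltonian

section Comparison

variable {m : ℕ} {ι : Type*} {A : Set ι} {G : ι → Euc m → Euc m} {E : ι → Euc m → ℝ}
  {L : NNReal} {b c : ℝ} {v w : Euc m → ℝ}

lemma le_add_of_doubling (hA : A.Nonempty) (hG : ∀ a ∈ A, LipschitzWith L (G a))
    (hv : ∀ a ∈ A, IsTransportSubsol (G a) (fun y => c + E a y) v)
    (hw : IsVSupOn (controlHam A G E) b univ w) {n : ℕ} {x y : Euc m} {η : ℝ}
    (hE : ∀ a ∈ A, E a x - E a y ≤ η)
    (hx : IsLocalMax (fun x' => v x' - n * ‖x' - y‖ ^ 2) x)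
    (hy : IsLocalMin (fun y' => w y' - -n * ‖y' - x‖ ^ 2) y) :
    b ≤ c + η + 2 * L * (n * ‖x - y‖ ^ 2) := by
  refine (hw.2 _ (contDiff_const_mul_norm_sub_sq (-n) x) y (mem_univ y) (hy.on univ)).trans
    (csSup_le (hA.image _) ?_)
  rintro _ ⟨a, ha, rfl⟩
  simp only [inner_gradient_left, (hasFDerivAt_const_mul_norm_sub_sq (-n : ℝ) x y).fderiv,
    smul_apply, smul_eq_mul, coe_innerSL_apply]
  have hsub : -(2 * n * ⟪x - y, G a x⟫) ≤ c + E a x := by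
    simpa only [smul_apply, smul_eq_mul, coe_innerSL_apply] using
      (hv a ha).neg_apply_le (contDiff_const_mul_norm_sub_sq n y).contDiffAt
        (hasFDerivAt_const_mul_norm_sub_sq n y x) hx
  have hLip : 2 * n * (⟪x - y, G a x⟫ + ⟪y - x, G a y⟫) ≤ 2 * n * (L * ‖x - y‖ ^ 2) := by
    gcongr
    exact inner_sub_add_inner_sub_le (hG a ha) x y
  linarith [hE a ha]

lemma le_of_isVSupOn_of_tendsto_sub (hA : A.Nonempty) (hG : ∀ a ∈ A, LipschitzWith L (G a))
    (hE : Equicontinuous fun a : A => E a)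
    (hv : ∀ a ∈ A, IsTransportSubsol (G a) (fun y => c + E a y) v)
    (hw : IsVSupOn (controlHam A G E) b univ w)
    (hvw : Tendsto (fun y => v y + -w y) (cocompact (Euc m)) atBot) : b ≤ c := by
  have hv_usc : UpperSemicontinuous v := (hv _ hA.some_mem).1
  have hw_usc : UpperSemicontinuous fun y => -w y :=
    (lowerSemicontinuousOn_univ_iff.1 hw.1).neg
  obtain ⟨K₀, hK₀, hK₀lt⟩ := mem_cocompact.1 (hvw.eventually_lt_atBot (v 0 + -w 0))
  have hmem : ∀ z, v 0 + -w 0 ≤ v z + -w z → z ∈ K₀ := fun z hle =>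
    by_contra fun hz => hle.not_gt (hK₀lt hz)
  obtain ⟨K, hK, hK₀K⟩ := exists_compact_superset hK₀
  have h0K : (0 : Euc m) ∈ K := interior_subset (hK₀K (hmem 0 le_rfl))
  obtain ⟨y₀, hy₀, hmax⟩ :=
    ((hv_usc.add hw_usc).upperSemicontinuousOn K).exists_isMaxOn ⟨0, h0K⟩ hK
  refine le_of_forall_pos_le_add fun ε hε => ?_
  obtain ⟨η, hη, hηε⟩ := exists_pos_mul_lt (half_pos hε) (2 * (L : ℝ))
  obtain ⟨n, x, y, hExy, hn, hx, hy⟩ := exists_doubling_max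
    (P := fun x y => ∀ a ∈ A, E a x - E a y ≤ ε / 2) hv_usc hw_usc hK hy₀ hmax
    (fun z _ hle => by
      refine ⟨mem_interior_iff_mem_nhds.1 (hK₀K (hmem z ((hmax h0K).trans hle))), ?_⟩
      obtain ⟨W, hW, hEW⟩ := Metric.equicontinuousAt_iff_pair.1 (hE z) (ε / 2) (half_pos hε)
      filter_upwards [prod_mem_nhds hW hW] with p hp a ha
      exact (le_abs_self _).trans (hEW p.1 hp.1 p.2 hp.2 ⟨a, ha⟩).le) hη
  have hy' : IsLocalMin (fun y' => w y' - -n * ‖y' - x‖ ^ 2) y := by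
    filter_upwards [hy] with y' hy'
    rw [norm_sub_rev x, norm_sub_rev x] at hy'
    linarith
  have hdoubling := le_add_of_doubling hA hG hv hw hExy hx hy'
  have hLη : 2 * L * (n * ‖x - y‖ ^ 2) ≤ 2 * L * η := by gcongr
  linarith

/-- Capping makes `u` bounded from above, hence smaller than `w` at infinity, at the price of an
arbitrarily small increase of the level. -/
lemma le_of_isVSupOn_of_tendsto (hA : A.Nonempty) (hG : ∀ a ∈ A, LipschitzWith L (G a))
    (hE : Equicontinuous fun a : A => E a)
    (hEcoer : ∀ C, ∀ᶠ y in cocompact (Euc m), ∀ a ∈ A, C ≤ E a y) {B : ℝ}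
    (hEB : ∀ a ∈ A, ∀ y, B ≤ E a y) {u : Euc m → ℝ}
    (hu : ∀ a ∈ A, IsTransportSubsol (G a) (fun y => c + E a y) u)
    (hw : IsVSupOn (controlHam A G E) b univ w) (hwcoer : Tendsto w (cocompact (Euc m)) atTop) :
    b ≤ c := by
  refine le_of_forall_pos_le_add fun ε hε => ?_
  obtain ⟨v, hv_neg, hv⟩ := exists_neg_isTransportSubsol hA hu
    ((hEcoer (-c)).mono fun y hy a ha => by linarith [hy a ha])
    (B := c + B) (fun a ha y => by linarith [hEB a ha y]) hε
  refine le_of_isVSupOn_of_tendsto_sub hA hG hE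
    (fun a ha => (hv a ha).mono fun y => by simp only; linarith) hw ?_
  exact tendsto_atBot_add_left_of_ge _ 0 (fun y => (hv_neg y).le)
    (tendsto_neg_atTop_atBot.comp hwcoer)

end Comparison

section StrictSubsolutions

/-- There is a global subsolution `u` of the Hamilton–Jacobi–Bellman equation at level `c` which is
strict on `s`. The level is allowed to vary: `u` solves the equation with right-hand side
`κ ≤ c`, where `κ` lies below `c` by a positive margin on `s`. -/
def HasStrictSubsolOn {V ι : Type*} [NormedAddCommGroup V] [NormedSpace ℝ V] (A : Set ι)
    (G : ι → V → V) (E : ι → V → ℝ) (c : ℝ) (s : Set V) : Prop :=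
  ∃ (u κ : V → ℝ) (δ : ℝ), 0 < δ ∧ UpperSemicontinuous κ ∧ (∀ y, κ y ≤ c) ∧
    (∀ y ∈ s, κ y ≤ c - δ) ∧ ∀ a ∈ A, IsTransportSubsol (G a) (κ + E a) u

section

variable {V ι : Type*} [NormedAddCommGroup V] {A : Set ι} {G : ι → V → V} {E : ι → V → ℝ}
  {c : ℝ} {s t : Set V}

lemma HasStrictSubsolOn.mono [NormedSpace ℝ V] (h : HasStrictSubsolOn A G E c t) (hst : s ⊆ t) :
    HasStrictSubsolOn A G E c s := by
  obtain ⟨u, κ, δ, hδ, hκ, hκc, hκt, hu⟩ := h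
  exact ⟨u, κ, δ, hδ, hκ, hκc, fun y hy => hκt y (hst hy), hu⟩

lemma HasStrictSubsolOn.union [InnerProductSpace ℝ V] [ProperSpace V] {L : NNReal}
    (hG : ∀ a ∈ A, LipschitzWith L (G a)) (hE : ∀ a ∈ A, Continuous (E a))
    (hs : HasStrictSubsolOn A G E c s) (ht : HasStrictSubsolOn A G E c t) :
    HasStrictSubsolOn A G E c (s ∪ t) := by
  obtain ⟨u₁, κ₁, δ₁, hδ₁, hκ₁, hκ₁c, hκ₁s, hu₁⟩ := hs
  obtain ⟨u₂, κ₂, δ₂, hδ₂, hκ₂, hκ₂c, hκ₂t, hu₂⟩ := ht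
  have hhalf : Continuous fun r : ℝ => 1 / 2 * r := by fun_prop
  have hhalf_mono : Monotone fun r : ℝ => 1 / 2 * r := monotone_mul_left_of_nonneg (by norm_num)
  have hhalf_usc : ∀ {h : V → ℝ}, UpperSemicontinuous h →
      UpperSemicontinuous fun y => 1 / 2 * h y := fun hh =>
    hhalf.comp_upperSemicontinuous hh hhalf_mono
  refine ⟨((1 / 2 : ℝ) * ·) ∘ u₁ + ((1 / 2 : ℝ) * ·) ∘ u₂, fun y => 1 / 2 * κ₁ y + 1 / 2 * κ₂ y,
    min δ₁ δ₂ / 2, by positivity, (hhalf_usc hκ₁).add (hhalf_usc hκ₂),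
    fun y => by linarith [hκ₁c y, hκ₂c y], ?_, fun a ha => ?_⟩
  · rintro y (hy | hy)
    · linarith [hκ₁s y hy, hκ₂c y, min_le_left δ₁ δ₂]
    · linarith [hκ₁c y, hκ₂t y hy, min_le_right δ₁ δ₂]
  · have hEa := (hE a ha).upperSemicontinuous
    refine (((hu₁ a ha).const_mul one_half_pos).add (hG a ha) (hhalf_usc (hκ₁.add hEa))
      (hhalf_usc (hκ₂.add hEa)) ((hu₂ a ha).const_mul one_half_pos)).mono fun y => ?_
    simp only [Pi.add_apply]
    linarith

lemma HasStrictSubsolOn.of_isCompact [InnerProductSpace ℝ V] [ProperSpace V] {L : NNReal}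
    (hG : ∀ a ∈ A, LipschitzWith L (G a)) (hE : ∀ a ∈ A, Continuous (E a))
    (hloc : ∀ y, ∃ U ∈ 𝓝 y, HasStrictSubsolOn A G E c U) (hs : IsCompact s) :
    HasStrictSubsolOn A G E c s := by
  obtain ⟨U, -, hU⟩ := hloc 0
  refine hs.induction_on (hU.mono (empty_subset U)) (fun _ _ hst ht => ht.mono hst)
    (fun _ _ => HasStrictSubsolOn.union hG hE) fun y _ => ?_
  obtain ⟨W, hW, hstrict⟩ := hloc y
  exact ⟨W, mem_nhdsWithin_of_mem_nhds hW, hstrict⟩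

/-- Far away, where the cost exceeds `1 - c`, the multiple `(1 - μ) * u` is strict by itself,
the Hamiltonian being convex with `controlHam A G E y 0 < c` there. -/
lemma HasStrictSubsolOn.exists_lt [NormedSpace ℝ V] [HasContDiffBump V] {B : ℝ}
    (hEB : ∀ a ∈ A, ∀ y, B ≤ E a y) (hfar : ∀ y ∉ s, ∀ a ∈ A, 1 - c ≤ E a y)
    (hs : HasStrictSubsolOn A G E c s) :
    ∃ c' < c, ∃ u : V → ℝ, ∀ a ∈ A, IsTransportSubsol (G a) (fun y => c' + E a y) u := by
  obtain ⟨u, κ, δ, hδ, -, hκc, hκs, hu⟩ := hs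
  obtain ⟨ν, hν, hνδ⟩ := exists_pos_mul_lt (half_pos hδ) |δ - c - B|
  let μ := min ν (1 / 2)
  have hμ : 0 < μ := by positivity
  have hμ1 : μ < 1 := (min_le_right _ _).trans_lt one_half_lt_one
  have hμδ : (δ - c - B) * μ ≤ δ / 2 :=
    calc (δ - c - B) * μ ≤ |δ - c - B| * ν := by
          gcongr
          exacts [le_abs_self _, min_le_left _ _]
      _ ≤ δ / 2 := hνδ.le
  refine ⟨c - min μ (δ / 2), sub_lt_self _ (by positivity), ((1 - μ) * ·) ∘ u, fun a ha =>
    ((hu a ha).const_mul (sub_pos.2 hμ1)).mono fun y => ?_⟩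
  simp only [Pi.add_apply]
  by_cases hy : y ∈ s
  · have hκ : (1 - μ) * κ y ≤ (1 - μ) * (c - δ) :=
      mul_le_mul_of_nonneg_left (hκs y hy) (sub_pos.2 hμ1).le
    linarith [mul_le_mul_of_nonneg_left (hEB a ha y) hμ.le, min_le_right μ (δ / 2)]
  · have hκ : (1 - μ) * κ y ≤ (1 - μ) * c :=
      mul_le_mul_of_nonneg_left (hκc y) (sub_pos.2 hμ1).le
    linarith [mul_le_mul_of_nonneg_left (hfar y hy a ha) hμ.le, min_le_left μ (δ / 2)]

end

variable {m : ℕ} {ι : Type*} {A : Set ι} {G : ι → Euc m → Euc m} {E : ι → Euc m → ℝ} {c : ℝ}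

lemma exists_nhds_hasStrictSubsolOn (hbdd : 0 ≤ c → ∀ y q, BddAbove (controlVals A G E y q))
    {y₀ : Euc m} (hy₀ : y₀ ∉ AubrySet (controlHam A G E) c) :
    ∃ U ∈ 𝓝 y₀, HasStrictSubsolOn A G E c U := by
  obtain ⟨u, δ, U, hu, hδ, hU, hy₀U, huU⟩ := not_not.1 hy₀
  have hκ : UpperSemicontinuous fun y => c + U.indicator (fun _ => -δ) y :=
    upperSemicontinuous_const.add (hU.upperSemicontinuous_indicator (neg_nonpos.2 hδ.le))
  refine ⟨U, hU.mem_nhds hy₀U, u, _, δ, hδ, hκ, fun y => ?_, fun y hy => ?_, fun a ha =>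
    ⟨upperSemicontinuousOn_univ_iff.1 hu.1, fun ψ hψ y hmax => ?_⟩⟩
  · linarith [indicator_nonpos (fun _ _ => neg_nonpos.2 hδ.le) y (s := U)]
  · rw [indicator_of_mem hy, sub_eq_add_neg]
  · by_cases hy : y ∈ U
    · simpa only [Pi.add_apply, indicator_of_mem hy, ← sub_eq_add_neg] using
        huU.neg_fderiv_le (fun hc => hbdd (by linarith)) hψ hy (hmax.on U) ha
    · simpa only [Pi.add_apply, indicator_of_notMem hy, add_zero] using
        hu.neg_fderiv_le hbdd hψ (mem_univ y) (hmax.on univ) ha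

lemma aubrySet_nonempty {L : NNReal} (hA : A.Nonempty) (hG : ∀ a ∈ A, LipschitzWith L (G a))
    (hE : ∀ a ∈ A, Continuous (E a))
    (hEcoer : ∀ C, ∀ᶠ y in cocompact (Euc m), ∀ a ∈ A, C ≤ E a y) {B : ℝ}
    (hEB : ∀ a ∈ A, ∀ y, B ≤ E a y) (hbdd : BddBelow (subsolLevels (controlHam A G E)))
    (hfin : 0 ≤ critVal (controlHam A G E) → ∀ y q, BddAbove (controlVals A G E y q)) :
    (AubrySet (controlHam A G E) (critVal (controlHam A G E))).Nonempty := by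
  by_contra hempty
  rw [not_nonempty_iff_eq_empty] at hempty
  obtain ⟨K, hK, hfar⟩ := mem_cocompact.1 (hEcoer (1 - critVal (controlHam A G E)))
  have hstrict := HasStrictSubsolOn.of_isCompact hG hE
    (fun y => exists_nhds_hasStrictSubsolOn hfin (hempty ▸ notMem_empty y)) hK
  obtain ⟨c', hc', u, hu⟩ := hstrict.exists_lt hEB fun y hy => hfar hy
  exact hc'.not_ge (csInf_le hbdd ⟨u, isVSubOn_controlHam hA hu⟩)

end StrictSubsolutions

section CellProblem

lemma equicontinuous_of_continuous_uncurry {X Y Z : Type*} [TopologicalSpace X]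
    [TopologicalSpace Y] [UniformSpace Z] {Φ : X → Y → Z} {k : Set Y} (hk : IsCompact k)
    (hΦ : Continuous Φ.uncurry) : Equicontinuous fun (y : k) x => Φ x y := by
  intro x₀ U hU
  obtain ⟨v, hv, hvU⟩ :=
    hk.mem_uniformity_of_prod hΦ.continuousOn (mem_univ x₀) (UniformSpace.symm hU)
  filter_upwards [nhdsWithin_univ x₀ ▸ hv] with x hx y using hvU x hx y y.2

lemma equicontinuous_add {κ X : Type*} [TopologicalSpace X] {φ ψ : κ → X → ℝ}
    (hφ : Equicontinuous φ) (hψ : Equicontinuous ψ) : Equicontinuous fun i x => φ i x + ψ i x := by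
  intro x₀
  rw [Metric.equicontinuousAt_iff_right]
  intro ε hε
  filter_upwards [Metric.equicontinuousAt_iff_right.1 (hφ x₀) _ (half_pos hε),
    Metric.equicontinuousAt_iff_right.1 (hψ x₀) _ (half_pos hε)] with x hxφ hxψ i
  exact (dist_add_add_le _ _ _ _).trans_lt (by linarith [hxφ i, hxψ i])

lemma eventually_cocompact_of_norm {V : Type*} [NormedAddCommGroup V] [ProperSpace V]
    {P : V → Prop} {R : ℝ} (h : ∀ y, R < ‖y‖ → P y) : ∀ᶠ y in cocompact V, P y :=
  (tendsto_norm_cocompact_atTop.eventually (eventually_gt_atTop R)).mono h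

variable {N M k : ℕ} {A : Set (Euc k)} {f : Euc N → Euc M → Euc k → Euc N}
  {g : Euc N → Euc M → Euc k → Euc M} {ℓ : Euc N → Euc M → Euc k → ℝ} {L Q : ℝ} (x0 p0 : Euc N)

/-- The running cost of the cell problem at `(x0, p0)`: the slow drift contributes the linear
term `p0·f(x0, y, a)`. -/
noncomputable def cellCost (f : Euc N → Euc M → Euc k → Euc N) (ℓ : Euc N → Euc M → Euc k → ℝ)
    (a : Euc k) (y : Euc M) : ℝ :=
  ⟪p0, f x0 y a⟫ + ℓ x0 y a

lemma cellH_eq_controlHam (A : Set (Euc k)) (f : Euc N → Euc M → Euc k → Euc N)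
    (g : Euc N → Euc M → Euc k → Euc M) (ℓ : Euc N → Euc M → Euc k → ℝ) :
    cellH A f g ℓ x0 p0 = controlHam A (fun a y => g x0 y a) (cellCost x0 p0 f ℓ) := by
  funext y q
  have : (fun a => -⟪p0, f x0 y a⟫ - ⟪q, g x0 y a⟫ - ℓ x0 y a) =
      fun a => -⟪q, g x0 y a⟫ - cellCost x0 p0 f ℓ a y :=
    funext fun a => by
      unfold cellCost
      ring
  rw [cellH, Ham, this, controlHam, controlVals]

lemma effH_eq_critVal_controlHam (A : Set (Euc k)) (f : Euc N → Euc M → Euc k → Euc N)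
    (g : Euc N → Euc M → Euc k → Euc M) (ℓ : Euc N → Euc M → Euc k → ℝ) :
    effH A f g ℓ x0 p0 =
      critVal (controlHam A (fun a y => g x0 y a) (cellCost x0 p0 f ℓ)) :=
  congrArg critVal (cellH_eq_controlHam x0 p0 A f g ℓ)

lemma abs_cellCost_sub_le (hf : ∀ x y, ∀ a ∈ A, ‖f x y a‖ ≤ Q) {a : Euc k} (ha : a ∈ A)
    (y : Euc M) : |cellCost x0 p0 f ℓ a y - ℓ x0 y a| ≤ ‖p0‖ * Q := by
  rw [cellCost, add_sub_cancel_right]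
  exact (abs_real_inner_le_norm _ _).trans (by gcongr; exact hf x0 y a ha)

lemma lipschitzWith_of_norm_sub_le_add {W : Type*} [NormedAddCommGroup W]
    {F : Euc N → Euc M → Euc k → W}
    (hF : ∀ (x₁ x₂ : Euc N) (y₁ y₂ : Euc M), ∀ a ∈ A,
      ‖F x₁ y₁ a - F x₂ y₂ a‖ ≤ L * (‖x₁ - x₂‖ + ‖y₁ - y₂‖)) {a : Euc k} (ha : a ∈ A) :
    LipschitzWith L.toNNReal fun y => F x0 y a :=
  .of_dist_le' fun y₁ y₂ => by
    simpa [dist_eq_norm] using hF x0 x0 y₁ y₂ a ha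

lemma equicontinuous_cellCost (hA : IsCompact A)
    (hf : ∀ (x₁ x₂ : Euc N) (y₁ y₂ : Euc M), ∀ a ∈ A,
      ‖f x₁ y₁ a - f x₂ y₂ a‖ ≤ L * (‖x₁ - x₂‖ + ‖y₁ - y₂‖))
    (hℓ : Continuous fun z : Euc N × Euc M × Euc k => ℓ z.1 z.2.1 z.2.2) :
    Equicontinuous fun a : A => cellCost x0 p0 f ℓ a := by
  refine equicontinuous_add (LipschitzWith.uniformEquicontinuous _ (‖innerSL ℝ p0‖₊ * L.toNNReal)
    fun a => ?_).equicontinuous (equicontinuous_of_continuous_uncurry hA ?_)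
  · exact (innerSL ℝ p0).lipschitz.comp (lipschitzWith_of_norm_sub_le_add x0 hf a.2)
  · exact hℓ.comp (continuous_const.prodMk continuous_id)

lemma eventually_le_cellCost (hf : ∀ x y, ∀ a ∈ A, ‖f x y a‖ ≤ Q)
    (hℓ : ∀ K : Set (Euc N), IsCompact K → ∀ c : ℝ, ∃ R : ℝ,
      ∀ y : Euc M, R < ‖y‖ → ∀ x ∈ K, ∀ a ∈ A, c < ℓ x y a) (C : ℝ) :
    ∀ᶠ y in cocompact (Euc M), ∀ a ∈ A, C ≤ cellCost x0 p0 f ℓ a y := by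
  obtain ⟨R, hR⟩ := hℓ {x0} isCompact_singleton (C + ‖p0‖ * Q)
  refine eventually_cocompact_of_norm (R := R) fun y hy a ha => ?_
  linarith [hR y hy x0 rfl a ha, (abs_le.1 (abs_cellCost_sub_le (ℓ := ℓ) x0 p0 hf ha y)).1]

lemma exists_forall_cellCost_le (hA : IsCompact A) (hf : ∀ x y, ∀ a ∈ A, ‖f x y a‖ ≤ Q)
    (hℓ : Continuous fun z : Euc N × Euc M × Euc k => ℓ z.1 z.2.1 z.2.2) (y : Euc M) :
    ∃ U, ∀ a ∈ A, cellCost x0 p0 f ℓ a y ≤ U := by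
  obtain ⟨U, hU⟩ := hA.bddAbove_image (f := fun a => ℓ x0 y a)
    (hℓ.comp (continuous_const.prodMk (continuous_const.prodMk continuous_id))).continuousOn
  refine ⟨U + ‖p0‖ * Q, fun a ha => ?_⟩
  linarith [hU (mem_image_of_mem _ ha), (abs_le.1 (abs_cellCost_sub_le (ℓ := ℓ) x0 p0 hf ha y)).2]

lemma exists_forall_le_cellCost (hA : IsCompact A) (hf : ∀ x y, ∀ a ∈ A, ‖f x y a‖ ≤ Q)
    (hℓ : Continuous fun z : Euc N × Euc M × Euc k => ℓ z.1 z.2.1 z.2.2)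
    (hcoer : ∀ K : Set (Euc N), IsCompact K → ∀ c : ℝ, ∃ R : ℝ,
      ∀ y : Euc M, R < ‖y‖ → ∀ x ∈ K, ∀ a ∈ A, c < ℓ x y a) :
    ∃ B, ∀ a ∈ A, ∀ y, B ≤ cellCost x0 p0 f ℓ a y := by
  obtain ⟨K, hK, hfar⟩ := mem_cocompact.1 (eventually_le_cellCost x0 p0 hf hcoer 0)
  obtain ⟨C, hC⟩ := (hK.prod hA).bddBelow_image (f := fun z : Euc M × Euc k => ℓ x0 z.1 z.2)
    (hℓ.comp (continuous_const.prodMk continuous_id)).continuousOn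
  refine ⟨min (C - ‖p0‖ * Q) 0, fun a ha y => ?_⟩
  by_cases hy : y ∈ K
  · have hCy : C ≤ ℓ x0 y a := hC (mem_image_of_mem _ (Set.mk_mem_prod hy ha))
    refine (min_le_left _ _).trans ?_
    linarith [(abs_le.1 (abs_cellCost_sub_le (ℓ := ℓ) x0 p0 hf ha y)).1]
  · exact (min_le_right _ _).trans (hfar hy a ha)

end CellProblem

theorem statement16_general {m : ℕ} {ι : Type*} {A : Set ι} (hA : A.Nonempty)
    {G : ι → Euc m → Euc m} {L : NNReal} (hG : ∀ a ∈ A, LipschitzWith L (G a))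
    {E : ι → Euc m → ℝ} (hE : Equicontinuous fun a : A => E a)
    (hEcoer : ∀ C, ∀ᶠ y in cocompact (Euc m), ∀ a ∈ A, C ≤ E a y)
    {B : ℝ} (hEB : ∀ a ∈ A, ∀ y, B ≤ E a y) (hEU : ∀ y, ∃ U, ∀ a ∈ A, E a y ≤ U)
    (hfin : (subsolLevels (controlHam A G E)).Nonempty)
    (hbdd : BddBelow (subsolLevels (controlHam A G E)))
    {b : ℝ} (hb : critVal (controlHam A G E) ≤ b)
    {w : Euc m → ℝ} (hw : IsVSupOn (controlHam A G E) b univ w)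
    (hwcoer : Tendsto w (cocompact (Euc m)) atTop)
    (hdist : ∀ᶠ y in cocompact (Euc m), 0 < intrinsicDist (controlHam A G E) b y 0) :
    b = critVal (controlHam A G E) ∧
      (AubrySet (controlHam A G E) (critVal (controlHam A G E))).Nonempty := by
  have hfinite : ∀ c ≤ b, 0 ≤ c → ∀ y q, BddAbove (controlVals A G E y q) := fun c hcb hc =>
    bddAbove_controlVals hG hEB hEU (hc.trans hcb) hdist
  have hE_cont : ∀ a ∈ A, Continuous (E a) := fun a ha => hE.continuous ⟨a, ha⟩
  refine ⟨(le_csInf hfin ?_).antisymm hb,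
    aubrySet_nonempty hA hG hE_cont hEcoer hEB hbdd (hfinite _ hb)⟩
  rintro c ⟨u, hu⟩
  rcases le_total b c with hbc | hcb
  · exact hbc
  · exact le_of_isVSupOn_of_tendsto hA hG hE hEcoer hEB
      (fun a ha => hu.isTransportSubsol (hfinite c hcb) ha) hw hwcoer

theorem statement16
    {N M k : ℕ} (A : Set (Euc k)) (hA : IsCompact A) (hAne : A.Nonempty)
    (f : Euc N → Euc M → Euc k → Euc N) (g : Euc N → Euc M → Euc k → Euc M)
    (L0 Q0 : ℝ) (hL0 : 0 < L0) (hQ0 : 0 < Q0)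
    (hfLip : ∀ (x₁ x₂ : Euc N) (y₁ y₂ : Euc M), ∀ a ∈ A,
      ‖f x₁ y₁ a - f x₂ y₂ a‖ ≤ L0 * (‖x₁ - x₂‖ + ‖y₁ - y₂‖))
    (hgLip : ∀ (x₁ x₂ : Euc N) (y₁ y₂ : Euc M), ∀ a ∈ A,
      ‖g x₁ y₁ a - g x₂ y₂ a‖ ≤ L0 * (‖x₁ - x₂‖ + ‖y₁ - y₂‖))
    (hfBdd : ∀ x y, ∀ a ∈ A, ‖f x y a‖ ≤ Q0)
    (hctrl : ∀ K : Set (Euc N × Euc M), IsCompact K → ∃ r > 0, ∀ z ∈ K,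
      Metric.ball (0 : Euc M) r ⊆ closure (convexHull ℝ ((fun a => g z.1 z.2 a) '' A)))
    (ℓ : Euc N → Euc M → Euc k → ℝ)
    (hlCont : Continuous fun z : Euc N × Euc M × Euc k => ℓ z.1 z.2.1 z.2.2)
    (hlCoer : ∀ B : Set (Euc N), IsCompact B → ∀ c : ℝ, ∃ R : ℝ,
      ∀ y : Euc M, R < ‖y‖ → ∀ x ∈ B, ∀ a ∈ A, c < ℓ x y a)
    (x0 p0 : Euc N)
    (hfin : (subsolLevels (cellH A f g ℓ x0 p0)).Nonempty)
    (hbdd : BddBelow (subsolLevels (cellH A f g ℓ x0 p0)))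
    (b : ℝ) (hb : effH A f g ℓ x0 p0 ≤ b)
    (w : Euc M → ℝ)
    (hwsub : IsVSubOn (cellH A f g ℓ x0 p0) b univ w)
    (hwsup : IsVSupOn (cellH A f g ℓ x0 p0) b univ w)
    (hwcoer : ∀ c : ℝ, ∃ R : ℝ, ∀ y : Euc M, R < ‖y‖ → c < w y)
    (hSb : ∀ Kc : Set (Euc M), IsCompact Kc → ∀ c : ℝ, ∃ R : ℝ,
      ∀ y : Euc M, R < ‖y‖ → ∀ y0 ∈ Kc,
        c < intrinsicDist (cellH A f g ℓ x0 p0) b y y0) :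
    b = effH A f g ℓ x0 p0 ∧
    (AubrySet (cellH A f g ℓ x0 p0) (effH A f g ℓ x0 p0)).Nonempty := by
  obtain ⟨B, hB⟩ := exists_forall_le_cellCost x0 p0 hA hfBdd hlCont hlCoer
  obtain ⟨R, hR⟩ := hSb {0} isCompact_singleton 0
  rw [effH_eq_critVal_controlHam, cellH_eq_controlHam] at *
  exact statement16_general hAne (fun a ha => lipschitzWith_of_norm_sub_le_add x0 hgLip ha)
    (equicontinuous_cellCost x0 p0 hA hfLip hlCont) (eventually_le_cellCost x0 p0 hfBdd hlCoer) hB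
    (exists_forall_cellCost_le x0 p0 hA hfBdd hlCont) hfin hbdd hb hwsup
    (tendsto_atTop.2 fun c => eventually_cocompact_of_norm fun y hy =>
      ((hwcoer c).choose_spec y hy).le)
    (eventually_cocompact_of_norm fun y hy => hR y hy 0 rfl)
end
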